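/- arXiv:0909.4915 — 7 statements merged into one kernel-verified Lean document; each statement's English description precedes it below -/
import Mathlib

section
/- Let h_1, …, h_n be hyperplanes in ℝ^d and let π_1, …, π_n denote the orthogonal projections of ℝ^d onto h_1, …, h_n respectively. Then there exists a compact convex set P ⊂ ℝ^d with nonempty interior such that π_i(P) ⊆ P for every i = 1, …, n. -/
open scoped InnerProductSpace

/-- A hyperplane in `ℝ^d`: the solution set of one nontrivial linear equation. -/
def IsHyperplane {d : ℕ} (h : Set (EuclideanSpace ℝ (Fin d))) : Prop :=
  ∃ (v : EuclideanSpace ℝ (Fin d)) (c : ℝ), v ≠ 0 ∧ h = {y | ⟪y, v⟫_ℝ = c}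

/-!
Along a word in the linear projections onto subspaces `L i`, the loss `‖v‖² - ‖W v‖²` is the sum of
the squared distances moved at each letter. In finite dimension the distance from `v` to `M ⊓ N` is
at most a constant times the larger of the distances to `M` and to `N`. Hence each new letter costs
only a constant factor, and the squared distance from `v` to the intersection of the subspaces named
in the word is at most `C` times the loss, with `C` independent of the word. On the orthogonal
complement of that intersection the word is therefore a contraction with a uniform ratio `c < 1`.

For affine projections, induct on the number of distinct letters. Cut a word after its shortest
prefix `B ++ [i]` containing all its letters. The displacement of the base point under the remaining
suffix is orthogonal to the common directions, so the prefix contracts it by `c`; the displacement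
under the prefix itself is bounded because `B` misses the letter `i`. Thus the orbit of a point
under all words is bounded, and a closed neighbourhood of its convex hull is stable since the
projections are affine and nonexpansive.
-/

section Nonexpansive

lemma mapsTo_cthickening_of_lipschitzWith_one {α β : Type*} [PseudoEMetricSpace α]
    [PseudoEMetricSpace β] {f : α → β} (hf : LipschitzWith 1 f) {s : Set α} {t : Set β}
    (hst : Set.MapsTo f s t) (δ : ℝ) :
    Set.MapsTo f (Metric.cthickening δ s) (Metric.cthickening δ t) := by
  intro x hx
  refine le_trans (Metric.le_infEDist.2 fun y hy => ?_) hx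
  calc Metric.infEDist (f x) t ≤ edist (f x) (f y) := Metric.infEDist_le_edist_of_mem (hst hy)
    _ ≤ edist x y := by simpa using hf x y

lemma exists_stable_body_of_isBounded {E ι : Type*} [NormedAddCommGroup E] [NormedSpace ℝ E]
    [ProperSpace E] (f : ι → E →ᵃ[ℝ] E) (hf : ∀ i, LipschitzWith 1 (f i)) {s : Set E}
    (hs : Bornology.IsBounded s) (hne : s.Nonempty) (hfs : ∀ i, Set.MapsTo (f i) s s) :
    ∃ P : Set E, IsCompact P ∧ Convex ℝ P ∧ (interior P).Nonempty ∧
      ∀ i, Set.MapsTo (f i) P P := by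
  have hfC (i : ι) : Set.MapsTo (f i) (convexHull ℝ s) (convexHull ℝ s) := by
    rw [Set.mapsTo_iff_image_subset, AffineMap.image_convexHull]
    exact convexHull_mono (hfs i).image_subset
  refine ⟨Metric.cthickening 1 (convexHull ℝ s), ?_, (convex_convexHull ℝ s).cthickening 1, ?_,
    fun i => mapsTo_cthickening_of_lipschitzWith_one (hf i) (hfC i) 1⟩
  · exact Metric.isCompact_of_isClosed_isBounded Metric.isClosed_cthickening
      (isBounded_convexHull.2 hs).cthickening
  · exact hne.mono <| (subset_convexHull ℝ s).trans <|
      (Metric.self_subset_thickening one_pos _).trans <|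
      Metric.thickening_subset_interior_cthickening 1 _

end Nonexpansive

section Linear

variable {V ι : Type*} [NormedAddCommGroup V] [InnerProductSpace ℝ V]

/-- The product of the orthogonal projections onto the subspaces `L i`, taken along a word `l` in
the indices; the last letter of `l` acts first. -/
noncomputable def linearWord (L : ι → Submodule ℝ V) [∀ i, (L i).HasOrthogonalProjection]
    (l : List ι) : V →L[ℝ] V :=
  (l.map fun i => (L i).starProjection).prod

section HasOrthogonalProjection

variable (L : ι → Submodule ℝ V) [∀ i, (L i).HasOrthogonalProjection]

@[simp]
lemma linearWord_nil (v : V) : linearWord L [] v = v := rfl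

@[simp]
lemma linearWord_cons (i : ι) (l : List ι) (v : V) :
    linearWord L (i :: l) v = (L i).starProjection (linearWord L l v) := by
  simp [linearWord]

lemma norm_linearWord_le (l : List ι) (v : V) : ‖linearWord L l v‖ ≤ ‖v‖ := by
  induction l with
  | nil => rfl
  | cons i l ih =>
    rw [linearWord_cons]
    exact ((L i).norm_starProjection_apply_le _).trans ih

lemma linearWord_eq_self {l : List ι} {v : V} (hv : ∀ i ∈ l, v ∈ L i) : linearWord L l v = v := by
  induction l with
  | nil => rfl
  | cons i l ih =>
    rw [List.forall_mem_cons] at hv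
    rw [linearWord_cons, ih hv.2, Submodule.starProjection_eq_self_iff.2 hv.1]

end HasOrthogonalProjection

variable [FiniteDimensional ℝ V]

lemma exists_norm_starProjection_inf_orthogonal_le (M N : Submodule ℝ V) :
    ∃ κ : ℝ, ∀ v, ‖(M ⊓ N)ᗮ.starProjection v‖ ≤
      κ * max ‖Mᗮ.starProjection v‖ ‖Nᗮ.starProjection v‖ := by
  -- `f` has kernel `M ⊓ N`, and an operator with closed range admits preimages of controlled norm.
  let f : V →L[ℝ] V × V := Mᗮ.starProjection.prod Nᗮ.starProjection
  obtain ⟨κ, -, hκ⟩ :=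
    f.rangeRestrict.exists_preimage_norm_le f.toLinearMap.surjective_rangeRestrict
  refine ⟨κ, fun v => ?_⟩
  obtain ⟨w, hwv, hw⟩ := hκ (f.rangeRestrict v)
  have hfw : f (v - w) = 0 := by
    rw [map_sub, sub_eq_zero]
    exact congrArg Subtype.val hwv.symm
  have hmem : v - w ∈ M ⊓ N := by
    simpa only [f, Submodule.mem_inf, ContinuousLinearMap.prod_apply, Prod.mk_eq_zero,
      Submodule.starProjection_apply_eq_zero_iff, Submodule.orthogonal_orthogonal] using hfw
  have hproj : (M ⊓ N)ᗮ.starProjection v = (M ⊓ N)ᗮ.starProjection w := by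
    rw [← sub_eq_zero, ← map_sub, Submodule.starProjection_apply_eq_zero_iff]
    exact Submodule.le_orthogonal_orthogonal _ hmem
  rw [hproj]
  exact ((M ⊓ N)ᗮ.norm_starProjection_apply_le w).trans hw

lemma norm_starProjection_orthogonal_le_add (L : ι → Submodule ℝ V) [DecidableEq ι] (i : ι)
    (l : List ι) (v : V) :
    ‖(L i)ᗮ.starProjection v‖ ≤ ‖(L i)ᗮ.starProjection (linearWord L l v)‖ +
      2 * ‖(l.toFinset.inf L)ᗮ.starProjection v‖ := by
  set N := l.toFinset.inf L
  have hfix : linearWord L l (N.starProjection v) = N.starProjection v :=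
    linearWord_eq_self L fun j hj =>
      Finset.inf_le (f := L) (List.mem_toFinset.2 hj) (N.starProjection_apply_mem v)
  have hdecomp : v - linearWord L l v =
      Nᗮ.starProjection v - linearWord L l (Nᗮ.starProjection v) := by
    rw [Submodule.starProjection_orthogonal_val, map_sub, hfix]
    abel
  have hmove : ‖v - linearWord L l v‖ ≤ 2 * ‖Nᗮ.starProjection v‖ := by
    rw [hdecomp, two_mul]
    exact (norm_sub_le _ _).trans (by gcongr; exact norm_linearWord_le L l _)
  calc ‖(L i)ᗮ.starProjection v‖
      = ‖(L i)ᗮ.starProjection (linearWord L l v) +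
          (L i)ᗮ.starProjection (v - linearWord L l v)‖ := by rw [← map_add, add_sub_cancel]
    _ ≤ ‖(L i)ᗮ.starProjection (linearWord L l v)‖ + ‖v - linearWord L l v‖ :=
        (norm_add_le _ _).trans
          (by gcongr; exact (L i)ᗮ.norm_starProjection_apply_le _)
    _ ≤ _ := by gcongr

variable [Finite ι] (L : ι → Submodule ℝ V)

lemma exists_sq_norm_starProjection_cons_le [DecidableEq ι] :
    ∃ A : ℝ, 1 ≤ A ∧ ∀ i (l : List ι) v,
      ‖((i :: l).toFinset.inf L)ᗮ.starProjection v‖ ^ 2 ≤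
        A * (‖(l.toFinset.inf L)ᗮ.starProjection v‖ ^ 2 +
          ‖(L i)ᗮ.starProjection (linearWord L l v)‖ ^ 2) := by
  choose κ hκ using fun p : ι × Finset ι =>
    exists_norm_starProjection_inf_orthogonal_le (L p.1) (p.2.inf L)
  obtain ⟨K, hK⟩ := Set.finite_range κ |>.bddAbove
  refine ⟨max 1 (5 * K ^ 2), le_max_left _ _, fun i l v => ?_⟩
  rw [List.toFinset_cons, Finset.inf_insert]
  set N := l.toFinset.inf L
  set a := ‖Nᗮ.starProjection v‖
  set b := ‖(L i)ᗮ.starProjection (linearWord L l v)‖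
  have hmax : max ‖(L i)ᗮ.starProjection v‖ a ≤ b + 2 * a :=
    max_le (norm_starProjection_orthogonal_le_add L i l v)
      (by linarith [show 0 ≤ a from norm_nonneg _, show 0 ≤ b from norm_nonneg _])
  have hnorm : ‖(L i ⊓ N)ᗮ.starProjection v‖ ≤ K * max ‖(L i)ᗮ.starProjection v‖ a :=
    (hκ (i, l.toFinset) v).trans (by gcongr; exact hK (Set.mem_range_self _))
  calc ‖(L i ⊓ N)ᗮ.starProjection v‖ ^ 2
      ≤ (K * max ‖(L i)ᗮ.starProjection v‖ a) ^ 2 := by gcongr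
    _ ≤ K ^ 2 * (b + 2 * a) ^ 2 := by rw [mul_pow]; gcongr
    _ ≤ K ^ 2 * (5 * (a ^ 2 + b ^ 2)) := by gcongr; linarith [sq_nonneg (2 * b - a)]
    _ = 5 * K ^ 2 * (a ^ 2 + b ^ 2) := by ring
    _ ≤ max 1 (5 * K ^ 2) * (a ^ 2 + b ^ 2) := by gcongr; exact le_max_right _ _

lemma exists_sq_norm_starProjection_orthogonal_le [DecidableEq ι] :
    ∃ C : ℝ, 1 ≤ C ∧ ∀ (l : List ι) v,
      ‖(l.toFinset.inf L)ᗮ.starProjection v‖ ^ 2 ≤ C * (‖v‖ ^ 2 - ‖linearWord L l v‖ ^ 2) := by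
  have := Fintype.ofFinite ι
  obtain ⟨A, hA, hstep⟩ := exists_sq_norm_starProjection_cons_le L
  have hloss (l : List ι) (v : V) : 0 ≤ ‖v‖ ^ 2 - ‖linearWord L l v‖ ^ 2 :=
    sub_nonneg.2 <| by gcongr; exact norm_linearWord_le L l v
  suffices h : ∀ (l : List ι) v, ‖(l.toFinset.inf L)ᗮ.starProjection v‖ ^ 2 ≤
      A ^ l.toFinset.card * (‖v‖ ^ 2 - ‖linearWord L l v‖ ^ 2) by
    refine ⟨A ^ Fintype.card ι, one_le_pow₀ hA, fun l v => (h l v).trans ?_⟩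
    gcongr
    · exact hloss l v
    · exact Finset.card_le_univ _
  intro l v
  induction l with
  | nil => simp
  | cons i l ih =>
    have hpyth := (L i).norm_sq_eq_add_norm_sq_starProjection (linearWord L l v)
    rw [← linearWord_cons] at hpyth
    by_cases hi : i ∈ l
    · rw [List.toFinset_cons, Finset.insert_eq_of_mem (List.mem_toFinset.2 hi)]
      refine ih.trans (mul_le_mul_of_nonneg_left ?_ (by positivity))
      linarith [sq_nonneg ‖(L i)ᗮ.starProjection (linearWord L l v)‖]
    · have hcard : (i :: l).toFinset.card = l.toFinset.card + 1 := by
        rw [List.toFinset_cons, Finset.card_insert_of_notMem (by simpa using hi)]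
      have hpow : 1 ≤ A ^ l.toFinset.card := one_le_pow₀ hA
      rw [hcard, pow_succ' A, mul_assoc]
      refine (hstep i l v).trans ?_
      gcongr
      nlinarith [sq_nonneg ‖(L i)ᗮ.starProjection (linearWord L l v)‖]

lemma exists_norm_linearWord_le_mul [DecidableEq ι] :
    ∃ c : ℝ, 0 ≤ c ∧ c < 1 ∧ ∀ (l : List ι), ∀ v ∈ (l.toFinset.inf L)ᗮ,
      ‖linearWord L l v‖ ≤ c * ‖v‖ := by
  obtain ⟨C, hC, h⟩ := exists_sq_norm_starProjection_orthogonal_le L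
  have hC₀ : 0 < C := one_pos.trans_le hC
  refine ⟨√(1 - C⁻¹), Real.sqrt_nonneg _, ?_, fun l v hv => ?_⟩
  · rw [Real.sqrt_lt' one_pos]
    linarith [inv_pos.2 hC₀]
  · have hv' := h l v
    rw [Submodule.starProjection_eq_self_iff.2 hv, ← inv_mul_le_iff₀ hC₀] at hv'
    refine le_of_sq_le_sq ?_ (by positivity)
    rw [mul_pow, Real.sq_sqrt (sub_nonneg.2 (inv_le_one_of_one_le₀ hC))]
    linarith

end Linear

lemma exists_eq_append_cons_of_ne_nil {α : Type*} {l : List α} (hl : l ≠ []) :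
    ∃ B a m, l = B ++ a :: m ∧ a ∉ B ∧ l ⊆ a :: B := by
  induction l using List.reverseRecOn with
  | nil => exact absurd rfl hl
  | append_singleton l b ih =>
    by_cases hb : b ∈ l
    · obtain ⟨B, a, m, hBm, ha, hsub⟩ := ih (List.ne_nil_of_mem hb)
      refine ⟨B, a, m ++ [b], by simp [hBm], ha, ?_⟩
      exact List.append_subset.2 ⟨hsub, by simpa using hsub hb⟩
    · exact ⟨l, b, [], rfl, hb, by simp⟩

section Affine

open EuclideanGeometry

variable {V P ι : Type*} [NormedAddCommGroup V] [InnerProductSpace ℝ V] [MetricSpace P]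
  [NormedAddTorsor V P]

lemma orthogonalProjection_vsub_eq_starProjection (s : AffineSubspace ℝ P) [Nonempty s]
    [s.direction.HasOrthogonalProjection] (x y : P) :
    (orthogonalProjection s x : P) -ᵥ (orthogonalProjection s y : P) =
      s.direction.starProjection (x -ᵥ y) :=
  congrArg Subtype.val ((orthogonalProjection s : P →ᵃ[ℝ] s).linearMap_vsub x y).symm

lemma lipschitzWith_orthogonalProjection (s : AffineSubspace ℝ P) [Nonempty s]
    [s.direction.HasOrthogonalProjection] :
    LipschitzWith 1 fun x => (orthogonalProjection s x : P) :=
  LipschitzWith.mk_one fun x y => by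
    rw [dist_eq_norm_vsub V, dist_eq_norm_vsub V x,
      orthogonalProjection_vsub_eq_starProjection]
    exact s.direction.norm_starProjection_apply_le _

lemma eq_orthogonalProjection_of_dist_le {s : AffineSubspace ℝ P} [Nonempty s]
    [s.direction.HasOrthogonalProjection] {x p : P} (hp : p ∈ s)
    (hmin : ∀ y ∈ s, dist x p ≤ dist x y) : p = orthogonalProjection s x := by
  refine ((dist_orthogonalProjection_eq_dist_iff_eq_of_mem hp).1 (le_antisymm ?_ ?_)).symm
  · rw [dist_orthogonalProjection_eq_infDist]
    exact Metric.infDist_le_dist_of_mem hp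
  · exact hmin _ (orthogonalProjection_mem x)

variable (s : ι → AffineSubspace ℝ P) [∀ i, Nonempty (s i)]
  [∀ i, (s i).direction.HasOrthogonalProjection]

/-- The composite of the orthogonal projections onto the affine subspaces `s i`, taken along a word
`l` in the indices; the last letter of `l` acts first. -/
noncomputable def affineWord (l : List ι) (x : P) : P :=
  l.foldr (fun i y => (orthogonalProjection (s i) y : P)) x

@[simp]
lemma affineWord_nil (x : P) : affineWord s [] x = x := rfl

@[simp]
lemma affineWord_cons (i : ι) (l : List ι) (x : P) :
    affineWord s (i :: l) x = orthogonalProjection (s i) (affineWord s l x) := rfl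

lemma affineWord_append (l m : List ι) (x : P) :
    affineWord s (l ++ m) x = affineWord s l (affineWord s m x) :=
  List.foldr_append

lemma affineWord_vsub_affineWord (l : List ι) (x y : P) :
    affineWord s l x -ᵥ affineWord s l y = linearWord (fun i => (s i).direction) l (x -ᵥ y) := by
  induction l with
  | nil => rfl
  | cons i l ih =>
    rw [affineWord_cons, affineWord_cons, linearWord_cons,
      orthogonalProjection_vsub_eq_starProjection, ih]

lemma dist_affineWord_affineWord_le (l : List ι) (x y : P) :
    dist (affineWord s l x) (affineWord s l y) ≤ dist x y := by
  rw [dist_eq_norm_vsub V, dist_eq_norm_vsub V x, affineWord_vsub_affineWord]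
  exact norm_linearWord_le _ l _

lemma affineWord_vsub_self_mem {N : Submodule ℝ V} {l : List ι}
    (hN : ∀ i ∈ l, N ≤ (s i).direction) (x : P) : affineWord s l x -ᵥ x ∈ Nᗮ := by
  induction l with
  | nil => simp
  | cons i l ih =>
    rw [List.forall_mem_cons] at hN
    rw [affineWord_cons, ← vsub_add_vsub_cancel _ (affineWord s l x)]
    exact add_mem (Submodule.orthogonal_le hN.1
      (orthogonalProjection_vsub_mem_direction_orthogonal (s i) _)) (ih hN.2)

lemma dist_affineWord_append_cons_le [DecidableEq ι] {c : ℝ}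
    (hc : ∀ (l : List ι), ∀ v ∈ (l.toFinset.inf fun i => (s i).direction)ᗮ,
      ‖linearWord (fun i => (s i).direction) l v‖ ≤ c * ‖v‖)
    {B m : List ι} {i : ι} (hm : m ⊆ i :: B) (x : P) :
    dist (affineWord s (B ++ i :: m) x) x ≤
      c * dist (affineWord s m x) x + dist (orthogonalProjection (s i) x : P) x +
        dist (affineWord s B x) x := by
  have hsplit : affineWord s (B ++ i :: m) x = affineWord s (B ++ [i]) (affineWord s m x) := by
    rw [← affineWord_append, List.append_assoc, List.singleton_append]
  have hmem : affineWord s m x -ᵥ x ∈ ((B ++ [i]).toFinset.inf fun i => (s i).direction)ᗮ :=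
    affineWord_vsub_self_mem s (fun j hj => Finset.inf_le (f := fun i => (s i).direction)
      (by simpa [or_comm] using hm hj)) x
  have hcontract : dist (affineWord s (B ++ i :: m) x) (affineWord s (B ++ [i]) x) ≤
      c * dist (affineWord s m x) x := by
    rw [hsplit, dist_eq_norm_vsub V, dist_eq_norm_vsub V _ x, affineWord_vsub_affineWord]
    exact hc (B ++ [i]) _ hmem
  have hlast : dist (affineWord s (B ++ [i]) x) (affineWord s B x) ≤
      dist (orthogonalProjection (s i) x : P) x := by
    simpa only [affineWord_append, affineWord_cons, affineWord_nil] using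
      dist_affineWord_affineWord_le s B (affineWord s [i] x) x
  linarith [dist_triangle4 (affineWord s (B ++ i :: m) x) (affineWord s (B ++ [i]) x)
    (affineWord s B x) x]

lemma dist_affineWord_le_div [DecidableEq ι] {c q K : ℝ} {k : ℕ} (hc₀ : 0 ≤ c) (hc₁ : c < 1)
    (hc : ∀ (l : List ι), ∀ v ∈ (l.toFinset.inf fun i => (s i).direction)ᗮ,
      ‖linearWord (fun i => (s i).direction) l v‖ ≤ c * ‖v‖)
    {x : P} (hq₀ : 0 ≤ q) (hq : ∀ i, dist (orthogonalProjection (s i) x : P) x ≤ q)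
    (hK : ∀ l : List ι, l.toFinset.card ≤ k → dist (affineWord s l x) x ≤ K)
    (l : List ι) (hl : l.toFinset.card ≤ k + 1) :
    dist (affineWord s l x) x ≤ (q + K) / (1 - c) := by
  have hK₀ : 0 ≤ K := dist_nonneg.trans (hK [] (by simp))
  have hc' : 0 < 1 - c := sub_pos.2 hc₁
  rcases eq_or_ne l [] with rfl | hne
  · rw [affineWord_nil, dist_self]
    positivity
  obtain ⟨B, i, m, rfl, hi, hsub⟩ := exists_eq_append_cons_of_ne_nil hne
  have hB : B.toFinset.card ≤ k := by
    have hcard := Finset.card_insert_of_notMem (mt List.mem_toFinset.1 hi)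
    have hle : (insert i B.toFinset).card ≤ (B ++ i :: m).toFinset.card :=
      Finset.card_le_card fun j hj => by
        simp only [Finset.mem_insert, List.mem_toFinset] at hj
        simp only [List.mem_toFinset, List.mem_append, List.mem_cons]
        tauto
    omega
  have hm : m.toFinset.card ≤ k + 1 :=
    (Finset.card_le_card fun j hj => by simp_all).trans hl
  have ih := dist_affineWord_le_div hc₀ hc₁ hc hq₀ hq hK m hm
  calc dist (affineWord s (B ++ i :: m) x) x
      ≤ c * dist (affineWord s m x) x + dist (orthogonalProjection (s i) x : P) x +
          dist (affineWord s B x) x :=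
        dist_affineWord_append_cons_le s hc (fun j hj => hsub (by simp [hj])) x
    _ ≤ c * ((q + K) / (1 - c)) + q + K := by gcongr; exacts [hq i, hK B hB]
    _ = (q + K) / (1 - c) := by field_simp; ring
termination_by l.length
decreasing_by grind

end Affine

lemma exists_dist_affineWord_le {V P ι : Type*} [NormedAddCommGroup V] [InnerProductSpace ℝ V]
    [FiniteDimensional ℝ V] [MetricSpace P] [NormedAddTorsor V P] [Finite ι]
    (s : ι → AffineSubspace ℝ P) [∀ i, Nonempty (s i)] (x : P) :
    ∃ K : ℝ, ∀ l, dist (affineWord s l x) x ≤ K := by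
  classical
  have := Fintype.ofFinite ι
  obtain ⟨c, hc₀, hc₁, hc⟩ := exists_norm_linearWord_le_mul fun i => (s i).direction
  obtain ⟨q, hq₀, hq⟩ :=
    (Set.finite_range fun i =>
      dist (EuclideanGeometry.orthogonalProjection (s i) x : P) x).bddAbove.exists_ge 0
  rw [Set.forall_mem_range] at hq
  suffices h : ∀ k : ℕ, ∃ K : ℝ, ∀ l : List ι, l.toFinset.card ≤ k →
      dist (affineWord s l x) x ≤ K by
    obtain ⟨K, hK⟩ := h (Fintype.card ι)
    exact ⟨K, fun l => hK l (Finset.card_le_univ _)⟩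
  intro k
  induction k with
  | zero => exact ⟨0, fun l hl => by simp_all⟩
  | succ k ih =>
    obtain ⟨K, hK⟩ := ih
    exact ⟨(q + K) / (1 - c), dist_affineWord_le_div s hc₀ hc₁ hc hq₀ hq hK⟩

lemma IsHyperplane.exists_affineSubspace {d : ℕ} {h : Set (EuclideanSpace ℝ (Fin d))}
    (hh : IsHyperplane h) : ∃ s : AffineSubspace ℝ (EuclideanSpace ℝ (Fin d)), (s : Set _) = h := by
  obtain ⟨v, c, -, rfl⟩ := hh
  refine ⟨(AffineSubspace.mk' c ⊥).comap (innerₛₗ ℝ v).toAffineMap, ?_⟩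
  ext y
  simp [real_inner_comm, sub_eq_zero]

open EuclideanGeometry in
theorem exists_projection_stable_body_general {E ι : Type*} [NormedAddCommGroup E]
    [InnerProductSpace ℝ E] [FiniteDimensional ℝ E] [Finite ι] (s : ι → AffineSubspace ℝ E)
    (π : ι → E → E) (hπ : ∀ i x, π i x ∈ s i ∧ ∀ y ∈ s i, dist x (π i x) ≤ dist x y) :
    ∃ P : Set E, IsCompact P ∧ Convex ℝ P ∧ (interior P).Nonempty ∧ ∀ i, π i '' P ⊆ P := by
  have (i : ι) : Nonempty (s i) := ⟨π i 0, (hπ i 0).1⟩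
  obtain rfl : π = fun i x => (orthogonalProjection (s i) x : E) :=
    funext₂ fun i x => eq_orthogonalProjection_of_dist_le (hπ i x).1 (hπ i x).2
  obtain ⟨K, hK⟩ := exists_dist_affineWord_le s 0
  obtain ⟨P, hcompact, hconvex, hint, hP⟩ := exists_stable_body_of_isBounded
    (fun i => (s i).subtype.comp (orthogonalProjection (s i)).toAffineMap)
    (fun i => lipschitzWith_orthogonalProjection (s i))
    (s := Set.range fun l => affineWord s l 0)
    (Metric.isBounded_closedBall.subset (Set.range_subset_iff.2 hK)) (Set.range_nonempty _)
    (fun i => by rintro _ ⟨l, rfl⟩; exact ⟨i :: l, rfl⟩)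
  exact ⟨P, hcompact, hconvex, hint, fun i => (hP i).image_subset⟩

/-- Given hyperplanes `h_1, …, h_n` in `ℝ^d` and the orthogonal projections
`π_1, …, π_n` onto them (characterized as nearest-point maps), there is a compact
convex set `P` with nonempty interior that is stable under all the projections. -/
theorem exists_projection_stable_body (d n : ℕ) (hd : 1 ≤ d)
    (h : Fin n → Set (EuclideanSpace ℝ (Fin d)))
    (hh : ∀ i, IsHyperplane (h i))
    (π : Fin n → EuclideanSpace ℝ (Fin d) → EuclideanSpace ℝ (Fin d))
    (hπ : ∀ i x, π i x ∈ h i ∧ ∀ y ∈ h i, dist x (π i x) ≤ dist x y) :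
    ∃ P : Set (EuclideanSpace ℝ (Fin d)),
      IsCompact P ∧ Convex ℝ P ∧ (interior P).Nonempty ∧ ∀ i, π i '' P ⊆ P := by
  choose s hs using fun i => (hh i).exists_affineSubspace
  obtain rfl : h = fun i => (s i : Set _) := (funext hs).symm
  exact exists_projection_stable_body_general s π hπ
end

section
/- Let P be a compact topological space and let {μ_p}_{p∈P} be a family of probability measures on ℝ^d, each absolutely continuous with respect to Lebesgue measure, depending continuously on p, and with all supports contained in a single compact set. Then for every ε > 0 there exists δ > 0 such that for every layer L of width less than δ and every p ∈ P one has μ_p(L) < ε. -/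
open scoped InnerProductSpace ENNReal
open MeasureTheory

/-!
Up to a uniformly small tail only layers meeting a fixed ball matter, and the offsets of those range
over a compact interval. For a fixed direction `u₀` and offset `a₀` the slabs of half-width `η`
around the hyperplane `⟪x, u₀⟫ = a₀` decrease to that null set, so their measure tends to `0`.
Inside the ball a thin layer with nearby direction and offset lies in such a slab, and upper
semicontinuity carries the bound to nearby parameters. Compactness of parameters, unit directions
and offsets makes the admissible width uniform.
-/

open Filter Metric Set Topology

section Measure

variable {X : Type*} [MeasurableSpace X]

theorem continuous_measure_of_isClosed {P : Type*} [TopologicalSpace P] [TopologicalSpace X]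
    [OpensMeasurableSpace X] {μ : P → Measure X} [∀ p, IsFiniteMeasure (μ p)]
    (hμ : ∀ U : Set X, IsOpen U → Continuous fun p => μ p U) {F : Set X} (hF : IsClosed F) :
    Continuous fun p => μ p F := by
  have hF_eq : (fun p => μ p F) = fun p => μ p univ - μ p Fᶜ := by
    ext p
    rw [← measure_compl hF.measurableSet.compl (measure_ne_top _ _), compl_compl]
  rw [hF_eq]
  exact continuous_iff_continuousAt.2 fun p => ENNReal.Tendsto.sub
    (hμ univ isOpen_univ).continuousAt (hμ Fᶜ hF.isOpen_compl).continuousAt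
    (Or.inl (measure_ne_top _ _))

theorem addHaar_preimage_singleton {E : Type*} [NormedAddCommGroup E] [NormedSpace ℝ E]
    [FiniteDimensional ℝ E] [MeasurableSpace E] [BorelSpace E] (ν : Measure E)
    [ν.IsAddHaarMeasure] {f : E →ₗ[ℝ] ℝ} (hf : f ≠ 0) (a : ℝ) : ν (f ⁻¹' {a}) = 0 := by
  have h_ae : ∀ᵐ x ∂ν, f x ∈ ({a}ᶜ : Set ℝ) :=
    (ae_comp_linearMap_mem_iff f ν volume (LinearMap.surjective_of_ne_zero hf)
      (measurableSet_singleton a).compl).2 (compl_mem_ae_iff.2 (measure_singleton a))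
  simpa [ae_iff, preimage] using h_ae

variable [PseudoMetricSpace X] [OpensMeasurableSpace X]

theorem tendsto_measure_compl_ball_atTop (ν : Measure X) [IsFiniteMeasure ν] (x : X) :
    Tendsto (fun R : ℝ => ν (ball x R)ᶜ) atTop (𝓝 0) := by
  have h_inter : ⋂ R : ℝ, (ball x R)ᶜ = ∅ :=
    iInter_eq_empty_iff.2 fun y => ⟨dist y x + 1, by simp⟩
  rw [← measure_empty (μ := ν), ← h_inter]
  exact tendsto_measure_iInter_atTop (fun R => measurableSet_ball.compl.nullMeasurableSet)
    (fun R S hRS => compl_subset_compl.2 (ball_subset_ball hRS)) ⟨0, measure_ne_top _ _⟩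

theorem exists_forall_measure_compl_ball_lt {P : Type*} [TopologicalSpace P] [CompactSpace P]
    {μ : P → Measure X} [∀ p, IsFiniteMeasure (μ p)]
    (hμ : ∀ F : Set X, IsClosed F → UpperSemicontinuous fun p => μ p F) (x : X)
    {ε : ℝ≥0∞} (hε : 0 < ε) : ∃ R : ℝ, ∀ p, μ p (ball x R)ᶜ < ε := by
  suffices ∃ R : ℝ, ∀ p ∈ univ, μ p (ball x R)ᶜ < ε by simpa using this
  refine isCompact_univ.induction_on (p := fun s => ∃ R : ℝ, ∀ p ∈ s, μ p (ball x R)ᶜ < ε)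
    ⟨0, by simp⟩ ?mono ?union ?nhds
  case mono => exact fun s t hst ⟨R, hR⟩ => ⟨R, fun p hp => hR p (hst hp)⟩
  case union =>
    rintro s t ⟨R, hR⟩ ⟨S, hS⟩
    refine ⟨max R S, fun p hp => hp.elim (fun hp => ?_) fun hp => ?_⟩
    · exact (measure_mono (compl_subset_compl.2 (ball_subset_ball (le_max_left R S)))).trans_lt
        (hR p hp)
    · exact (measure_mono (compl_subset_compl.2 (ball_subset_ball (le_max_right R S)))).trans_lt
        (hS p hp)
  case nhds =>
    intro p₀ _
    obtain ⟨R, hR⟩ := ((tendsto_measure_compl_ball_atTop (μ p₀) x).eventually_lt_const hε).exists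
    exact ⟨_, mem_nhdsWithin_of_mem_nhds (hμ _ isOpen_ball.isClosed_compl p₀ ε hR), R,
      fun _ hp => hp⟩

end Measure

section Layer

variable {E : Type*} [NormedAddCommGroup E] [InnerProductSpace ℝ E] {u : E} {a b a' b' : ℝ}

/-- The layer between the hyperplanes `⟪x, u⟫ = a` and `⟪x, u⟫ = b`. The normal vector `u` is not
required to be a unit vector, and `b - a` is the width only when it is. -/
def layer (u : E) (a b : ℝ) : Set E := {x | a ≤ ⟪x, u⟫_ℝ ∧ ⟪x, u⟫_ℝ ≤ b}

theorem isClosed_layer (u : E) (a b : ℝ) : IsClosed (layer u a b) :=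
  isClosed_Icc.preimage (f := fun x => ⟪x, u⟫_ℝ) (by fun_prop)

theorem layer_subset_layer (u : E) (ha : a' ≤ a) (hb : b ≤ b') :
    layer u a b ⊆ layer u a' b' :=
  fun _ hx => ⟨ha.trans hx.1, hx.2.trans hb⟩

theorem iInter_layer_eq_hyperplane (u : E) (a : ℝ) :
    ⋂ η > (0 : ℝ), layer u (a - η) (a + η) = {x | ⟪x, u⟫_ℝ = a} := by
  ext x
  simp only [mem_iInter, layer, mem_ofPred_eq]
  constructor
  · intro h
    exact le_antisymm (le_of_forall_pos_le_add fun η hη => (h η hη).2)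
      (le_of_forall_pos_le_add fun η hη => by linarith [(h η hη).1])
  · rintro rfl η hη
    constructor <;> linarith

theorem layer_inter_ball_subset_layer (u v : E) (a b R : ℝ) :
    layer u a b ∩ ball 0 R ⊆ layer v (a - R * ‖u - v‖) (b + R * ‖u - v‖) := by
  rintro x ⟨⟨hax, hxb⟩, hx⟩
  have h_dir : |⟪x, u⟫_ℝ - ⟪x, v⟫_ℝ| ≤ R * ‖u - v‖ := by
    rw [← inner_sub_right]
    exact (abs_real_inner_le_norm _ _).trans
      (mul_le_mul_of_nonneg_right (mem_ball_zero_iff.1 hx).le (norm_nonneg _))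
  obtain ⟨h_lower, h_upper⟩ := abs_le.1 h_dir
  constructor <;> linarith

theorem offsets_of_layer_inter_ball_nonempty {R : ℝ} (hu : ‖u‖ = 1)
    (h : (layer u a b ∩ ball 0 R).Nonempty) : a ≤ R ∧ -R ≤ b := by
  obtain ⟨x, ⟨hax, hxb⟩, hx⟩ := h
  have hxu : |⟪x, u⟫_ℝ| ≤ R := by
    simpa [hu] using (abs_real_inner_le_norm x u).trans
      (mul_le_mul_of_nonneg_right (mem_ball_zero_iff.1 hx).le (norm_nonneg u))
  obtain ⟨h_lower, h_upper⟩ := abs_le.1 hxu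
  exact ⟨hax.trans h_upper, h_lower.trans hxb⟩

variable [MeasurableSpace E]

theorem addHaar_hyperplane [FiniteDimensional ℝ E] [BorelSpace E] (ν : Measure E)
    [ν.IsAddHaarMeasure] (hu : u ≠ 0) (a : ℝ) : ν {x | ⟪x, u⟫_ℝ = a} = 0 := by
  have h_inner : innerₗ E u ≠ 0 := fun h => hu (inner_self_eq_zero.1 (LinearMap.congr_fun h u))
  simpa [preimage, real_inner_comm] using addHaar_preimage_singleton ν h_inner a

variable [OpensMeasurableSpace E]

theorem exists_pos_measure_layer_lt {ν : Measure E} [IsFiniteMeasure ν]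
    (hν : ν {x | ⟪x, u⟫_ℝ = a} = 0) {ε : ℝ≥0∞} (hε : 0 < ε) :
    ∃ η > (0 : ℝ), ν (layer u (a - η) (a + η)) < ε := by
  have h_lim : Tendsto (fun η : ℝ => ν (layer u (a - η) (a + η))) (𝓝[>] 0) (𝓝 0) := by
    rw [← hν, ← iInter_layer_eq_hyperplane]
    exact tendsto_measure_biInter_gt (fun η _ => (isClosed_layer _ _ _).nullMeasurableSet)
      (fun η η' _ h => layer_subset_layer u (by linarith) (by linarith))
      ⟨1, one_pos, measure_ne_top _ _⟩
  obtain ⟨η, hη_lt, hη_pos⟩ := ((h_lim.eventually_lt_const hε).and self_mem_nhdsWithin).exists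
  exact ⟨η, hη_pos, hη_lt⟩

variable {P : Type*} [TopologicalSpace P] {μ : P → Measure E} [∀ p, IsFiniteMeasure (μ p)]
  {ε : ℝ≥0∞}

theorem eventually_measure_layer_inter_ball_lt
    (hμ : ∀ F : Set E, IsClosed F → UpperSemicontinuous fun p => μ p F) {p₀ : P} {u₀ : E} {a₀ : ℝ}
    (hnull : μ p₀ {x | ⟪x, u₀⟫_ℝ = a₀} = 0) (R : ℝ) (hε : 0 < ε) :
    ∀ᶠ z : ℝ × P × E × ℝ in 𝓝 (0, p₀, u₀, a₀),
      μ z.2.1 (layer z.2.2.1 z.2.2.2 (z.2.2.2 + z.1) ∩ ball 0 R) < ε := by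
  obtain ⟨η, hη, hlt⟩ := exists_pos_measure_layer_lt hnull hε
  have h_param : ∀ᶠ z : ℝ × P × E × ℝ in 𝓝 (0, p₀, u₀, a₀),
      μ z.2.1 (layer u₀ (a₀ - η) (a₀ + η)) < ε :=
    (continuous_snd.fst.tendsto (0, p₀, u₀, a₀)).eventually (hμ _ (isClosed_layer _ _ _) p₀ ε hlt)
  have h_lower : ∀ᶠ z : ℝ × P × E × ℝ in 𝓝 (0, p₀, u₀, a₀),
      a₀ - η < z.2.2.2 - R * ‖z.2.2.1 - u₀‖ :=
    (Continuous.tendsto (by fun_prop) _).eventually_const_lt (by simpa using hη)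
  have h_upper : ∀ᶠ z : ℝ × P × E × ℝ in 𝓝 (0, p₀, u₀, a₀),
      z.2.2.2 + z.1 + R * ‖z.2.2.1 - u₀‖ < a₀ + η :=
    (Continuous.tendsto (by fun_prop) _).eventually_lt_const (by simpa using hη)
  filter_upwards [h_param, h_lower, h_upper] with z hz hz_lower hz_upper
  exact (measure_mono ((layer_inter_ball_subset_layer _ u₀ _ _ R).trans
    (layer_subset_layer u₀ hz_lower.le hz_upper.le))).trans_lt hz

variable [CompactSpace P] [FiniteDimensional ℝ E]

theorem exists_forall_measure_layer_inter_ball_lt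
    (hμ : ∀ F : Set E, IsClosed F → UpperSemicontinuous fun p => μ p F)
    (hnull : ∀ p (u : E) (a : ℝ), ‖u‖ = 1 → μ p {x | ⟪x, u⟫_ℝ = a} = 0) (R : ℝ) (hε : 0 < ε) :
    ∃ δ > (0 : ℝ), ∀ (u : E) (a b : ℝ), ‖u‖ = 1 → b - a < δ → ∀ p,
      μ p (layer u a b ∩ ball 0 R) < ε := by
  have h_compact : IsCompact ((univ : Set P) ×ˢ sphere (0 : E) 1 ×ˢ Icc (-R - 1) R) :=
    isCompact_univ.prod ((isCompact_sphere _ _).prod isCompact_Icc)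
  have h_unif : ∀ᶠ δ in 𝓝 (0 : ℝ), ∀ y ∈ (univ : Set P) ×ˢ sphere (0 : E) 1 ×ˢ Icc (-R - 1) R,
      μ y.1 (layer y.2.1 y.2.2 (y.2.2 + δ) ∩ ball 0 R) < ε :=
    h_compact.eventually_forall_of_forall_eventually fun ⟨p₀, u₀, a₀⟩ ⟨_, hu₀, _⟩ =>
      eventually_measure_layer_inter_ball_lt hμ
        (hnull p₀ u₀ a₀ (mem_sphere_zero_iff_norm.1 hu₀)) R hε
  obtain ⟨δ, ⟨h_unif, hδ_one⟩, hδ⟩ := (((h_unif.and (eventually_lt_nhds one_pos)).filter_mono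
    nhdsWithin_le_nhds).and (self_mem_nhdsWithin (s := Ioi (0 : ℝ)))).exists
  refine ⟨δ, hδ, fun u a b hu hab p => ?_⟩
  rcases (layer u a b ∩ ball 0 R).eq_empty_or_nonempty with h_empty | h_nonempty
  · rwa [h_empty, measure_empty]
  · obtain ⟨haR, hRb⟩ := offsets_of_layer_inter_ball_nonempty hu h_nonempty
    exact (measure_mono (inter_subset_inter_left _
      (layer_subset_layer u le_rfl (by linarith)))).trans_lt
      (h_unif (p, u, a) ⟨mem_univ p, mem_sphere_zero_iff_norm.2 hu, by linarith, haR⟩)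

theorem layer_measure_small_general
    (hμ : ∀ F : Set E, IsClosed F → UpperSemicontinuous fun p => μ p F)
    (hnull : ∀ p (u : E) (a : ℝ), ‖u‖ = 1 → μ p {x | ⟪x, u⟫_ℝ = a} = 0) (hε : 0 < ε) :
    ∃ δ > (0 : ℝ), ∀ (u : E) (a b : ℝ), ‖u‖ = 1 → b - a < δ → ∀ p, μ p (layer u a b) < ε := by
  have hε_half : 0 < ε / 2 := ENNReal.half_pos hε.ne'
  obtain ⟨R, h_tail⟩ := exists_forall_measure_compl_ball_lt hμ (0 : E) hε_half
  obtain ⟨δ, hδ, h_ball⟩ := exists_forall_measure_layer_inter_ball_lt hμ hnull R hε_half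
  refine ⟨δ, hδ, fun u a b hu hab p => ?_⟩
  calc μ p (layer u a b)
      ≤ μ p (layer u a b ∩ ball 0 R) + μ p (layer u a b \ ball 0 R) :=
        measure_le_inter_add_sdiff _ _ _
    _ ≤ μ p (layer u a b ∩ ball 0 R) + μ p (ball 0 R)ᶜ := by gcongr; exact sdiff_subset_compl _ _
    _ < ε / 2 + ε / 2 := ENNReal.add_lt_add (h_ball u a b hu hab p) (h_tail p)
    _ = ε := ENNReal.add_halves ε

end Layer

/-- Uniform smallness of layers: for a family of absolutely continuous probability
measures on `ℝ^d`, parameterized by a compact space, depending continuously on the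
parameter, with all supports in a single compact set, and any `ε > 0`, there is
`δ > 0` such that every layer of width `< δ` has measure `< ε` for all parameters. -/
theorem layer_measure_small (d : ℕ) {P : Type*} [TopologicalSpace P] [CompactSpace P]
    (μ : P → Measure (EuclideanSpace ℝ (Fin d)))
    (hprob : ∀ p, IsProbabilityMeasure (μ p))
    (hac : ∀ p, μ p ≪ volume)
    (hcont : ∀ U : Set (EuclideanSpace ℝ (Fin d)), IsOpen U →
      Continuous fun p => μ p U)
    (K : Set (EuclideanSpace ℝ (Fin d))) (hK : IsCompact K)
    (hsupp : ∀ p, μ p Kᶜ = 0)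
    (ε : ℝ) (hε : 0 < ε) :
    ∃ δ > (0 : ℝ), ∀ (u : EuclideanSpace ℝ (Fin d)) (a b : ℝ),
      ‖u‖ = 1 → a ≤ b → b - a < δ → ∀ p,
        μ p {x | a ≤ ⟪x, u⟫_ℝ ∧ ⟪x, u⟫_ℝ ≤ b} < ENNReal.ofReal ε := by
  obtain ⟨δ, hδ, h_small⟩ := layer_measure_small_general
    (fun F hF => (continuous_measure_of_isClosed hcont hF).upperSemicontinuous)
    (fun p u a hu => hac p (addHaar_hyperplane volume (norm_ne_zero_iff.1 (by simp [hu])) a))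
    (ENNReal.ofReal_pos.2 hε)
  exact ⟨δ, hδ, fun u a b hu _ => h_small u a b hu⟩
end

section
/- Let P be a topological space with a countable base and let {μ_p}_{p∈P} be a family of probability measures on ℝ^d, each absolutely continuous with respect to Lebesgue measure, depending continuously on p, and with all supports contained in a single compact set. Define f_p(y) = min over all closed halfspaces H containing y of μ_p(H); equivalently f_p(y) = inf over unit vectors u of μ_p({x : ⟨x, u⟩ ≥ ⟨y, u⟩}). Then (p, y) ↦ f_p(y) is continuous on P × ℝ^d, and the infimum is attained. -/
open scoped InnerProductSpace ENNReal
open MeasureTheory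

/-!
The set of `((p, y, u), x)` with `⟪y, u⟫ < ⟪x, u⟫` is open, and so is the one with the reversed
strict inequality. Measures of sections of an open set are lower semicontinuous: a compact set
almost exhausting one section has, by the tube lemma, a neighborhood contained in all nearby
sections. As the boundary hyperplane is null, the measures of the two complementary halfspaces
are therefore lower semicontinuous in `(p, y, u)`; their sum, the total mass, is continuous, so each
of them is continuous. Minimizing over the compact unit sphere preserves continuity in `(p, y)`.
-/

open Set Filter Topology

section Semicontinuity

variable {T : Type*} [TopologicalSpace T]

lemma continuous_of_lowerSemicontinuous_of_continuous_add {a b : T → ℝ≥0∞}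
    (ha : LowerSemicontinuous a) (hb : LowerSemicontinuous b) (hb_top : ∀ t, b t ≠ ∞)
    (hab : Continuous fun t => a t + b t) : Continuous a := by
  refine continuous_iff_lower_upperSemicontinuous.2 ⟨ha, fun t₀ c hc => ?_⟩
  -- Near `t₀` the function `b` may jump up; capped at `b t₀` it converges, and `a` stays bounded
  -- above by the resulting difference.
  have tendsto_min : Tendsto (fun t => min (b t) (b t₀)) (𝓝 t₀) (𝓝 (b t₀)) :=
    tendsto_order.2
      ⟨fun r hr => (hb t₀ r hr).mono fun t ht => lt_min ht hr,
        fun r hr => .of_forall fun t => (min_le_right _ _).trans_lt hr⟩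
  have tendsto_sub : Tendsto (fun t => a t + b t - min (b t) (b t₀)) (𝓝 t₀) (𝓝 (a t₀)) := by
    simpa only [ENNReal.add_sub_cancel_right (hb_top t₀)] using
      ENNReal.Tendsto.sub (hab.tendsto t₀) tendsto_min (.inr (hb_top t₀))
  filter_upwards [tendsto_sub.eventually_lt_const hc] with t ht
  calc a t = a t + b t - b t := (ENNReal.add_sub_cancel_right (hb_top t)).symm
    _ ≤ a t + b t - min (b t) (b t₀) := tsub_le_tsub_left (min_le_left _ _) _
    _ < c := ht

variable {X : Type*} [TopologicalSpace X] [MeasurableSpace X]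
  {μ : T → Measure X} [∀ t, (μ t).Regular]

lemma lowerSemicontinuous_measure_preimage_prodMk
    (hμ : ∀ U : Set X, IsOpen U → LowerSemicontinuous fun t => μ t U)
    {W : Set (T × X)} (hW : IsOpen W) :
    LowerSemicontinuous fun t => μ t (Prod.mk t ⁻¹' W) := by
  intro t₀ c hc
  obtain ⟨C, hCW, hC, hcC⟩ := (hW.preimage (.prodMk_right t₀)).exists_lt_isCompact hc
  obtain ⟨N, V, hN, hV, htN, hCV, hNV⟩ :=
    generalized_tube_lemma isCompact_singleton hC hW
      (by rintro ⟨t, x⟩ ⟨rfl, hx⟩; exact hCW hx)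
  have hcV : ∀ᶠ t in 𝓝 t₀, c < μ t V := hμ V hV t₀ c (hcC.trans_le (measure_mono hCV))
  filter_upwards [hcV, hN.mem_nhds (htN rfl)] with t ht htN
  exact ht.trans_le (measure_mono fun x hx => hNV ⟨htN, hx⟩)

lemma continuous_measure_setOf_le [OpensMeasurableSpace X] [∀ t, IsFiniteMeasure (μ t)]
    (hμ : ∀ U : Set X, IsOpen U → LowerSemicontinuous fun t => μ t U)
    (hmass : Continuous fun t => μ t univ)
    {α : Type*} [LinearOrder α] [TopologicalSpace α] [OrderClosedTopology α] {f g : T → X → α}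
    (hf : Continuous ↿f) (hg : Continuous ↿g) (hfg : ∀ t, μ t {x | f t x = g t x} = 0) :
    Continuous fun t => μ t {x | f t x ≤ g t x} := by
  have measure_le_eq_lt (t : T) : μ t {x | f t x ≤ g t x} = μ t {x | f t x < g t x} :=
    measure_congr <| by
      filter_upwards [measure_eq_zero_iff_ae_notMem.1 (hfg t)] with x hx
      exact propext (Ne.le_iff_lt hx)
  have lsc_le : LowerSemicontinuous fun t => μ t {x | f t x ≤ g t x} := by
    simp only [measure_le_eq_lt]
    exact lowerSemicontinuous_measure_preimage_prodMk hμ (isOpen_lt hf hg)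
  have lsc_gt : LowerSemicontinuous fun t => μ t {x | g t x < f t x} :=
    lowerSemicontinuous_measure_preimage_prodMk hμ (isOpen_lt hg hf)
  refine continuous_of_lowerSemicontinuous_of_continuous_add lsc_le lsc_gt
    (fun t => measure_ne_top _ _) (hmass.congr fun t => ?_)
  have isOpen_gt : IsOpen {x | g t x < f t x} :=
    isOpen_lt (hg.comp (.prodMk_right t)) (hf.comp (.prodMk_right t))
  have compl_gt : {x | g t x < f t x}ᶜ = {x | f t x ≤ g t x} := by
    ext x
    exact not_lt
  rw [← compl_gt, add_comm, measure_add_measure_compl isOpen_gt.measurableSet]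

end Semicontinuity

lemma addHaar_setOf_linearMap_eq {E : Type*} [NormedAddCommGroup E]
    [NormedSpace ℝ E] [FiniteDimensional ℝ E] [MeasurableSpace E] [BorelSpace E]
    (ν : Measure E) [ν.IsAddHaarMeasure] {φ : E →ₗ[ℝ] ℝ} (hφ : φ ≠ 0) (c : ℝ) :
    ν {x | φ x = c} = 0 :=
  measure_eq_zero_iff_ae_notMem.2 <|
    (ae_comp_linearMap_mem_iff φ ν volume (LinearMap.surjective hφ)
      (measurableSet_singleton c).compl).2 (measure_eq_zero_iff_ae_notMem.1 (measure_singleton c))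

section HalfspaceDepth

variable {E : Type*} [NormedAddCommGroup E] [InnerProductSpace ℝ E] [MeasurableSpace E]

lemma addHaar_setOf_inner_eq [FiniteDimensional ℝ E] [BorelSpace E] (ν : Measure E)
    [ν.IsAddHaarMeasure] {u : E} (hu : u ≠ 0) (c : ℝ) : ν {x | ⟪x, u⟫_ℝ = c} = 0 := by
  have inner_ne_zero : innerₛₗ ℝ u ≠ 0 := fun h =>
    hu (inner_self_eq_zero.1 (LinearMap.congr_fun h u))
  simpa only [innerₛₗ_apply_apply, real_inner_comm] using
    addHaar_setOf_linearMap_eq ν inner_ne_zero c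

/-- The halfspace depth (Tukey depth) of the point `y` with respect to the measure `μ`: the infimum
of the measures of the closed halfspaces containing `y`. Only the halfspaces with `y` on their
boundary are considered, since any other one contains a translate of this kind. -/
noncomputable def halfspaceDepth (μ : Measure E) (y : E) : ℝ≥0∞ :=
  ⨅ u : Metric.sphere (0 : E) 1, μ {x | ⟪y, (u : E)⟫_ℝ ≤ ⟪x, (u : E)⟫_ℝ}

variable [BorelSpace E] {P : Type*} [TopologicalSpace P] {μ : P → Measure E}
  [∀ p, IsFiniteMeasure (μ p)]

lemma continuous_measure_halfspace [∀ p, (μ p).Regular]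
    (hμ : ∀ U : Set E, IsOpen U → LowerSemicontinuous fun p => μ p U)
    (hmass : Continuous fun p => μ p univ)
    (hnull : ∀ p (u : E), u ≠ 0 → ∀ c : ℝ, μ p {x | ⟪x, u⟫_ℝ = c} = 0) :
    Continuous fun q : (P × E) × Metric.sphere (0 : E) 1 =>
      μ q.1.1 {x | ⟪q.1.2, (q.2 : E)⟫_ℝ ≤ ⟪x, (q.2 : E)⟫_ℝ} := by
  have continuous_fst_fst : Continuous fun q : (P × E) × Metric.sphere (0 : E) 1 => q.1.1 := by
    fun_prop
  refine continuous_measure_setOf_le (μ := fun q : (P × E) × Metric.sphere (0 : E) 1 => μ q.1.1)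
    (f := fun q _ => ⟪q.1.2, (q.2 : E)⟫_ℝ) (g := fun q x => ⟪x, (q.2 : E)⟫_ℝ)
    (fun U hU => (hμ U hU).comp continuous_fst_fst) (hmass.comp continuous_fst_fst)
    (by fun_prop) (by fun_prop) fun q => ?_
  simpa only [eq_comm] using hnull q.1.1 q.2 (ne_zero_of_mem_unit_sphere q.2) ⟪q.1.2, (q.2 : E)⟫_ℝ

variable [FiniteDimensional ℝ E]

lemma continuous_halfspaceDepth
    (hμ : ∀ U : Set E, IsOpen U → LowerSemicontinuous fun p => μ p U)
    (hmass : Continuous fun p => μ p univ)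
    (hnull : ∀ p (u : E), u ≠ 0 → ∀ c : ℝ, μ p {x | ⟪x, u⟫_ℝ = c} = 0) :
    Continuous fun q : P × E => halfspaceDepth (μ q.1) q.2 := by
  have continuous_sInf := isCompact_univ.continuous_sInf
    (f := fun (q : P × E) (u : Metric.sphere (0 : E) 1) =>
      μ q.1 {x | ⟪q.2, (u : E)⟫_ℝ ≤ ⟪x, (u : E)⟫_ℝ})
    (continuous_measure_halfspace hμ hmass hnull)
  simpa only [image_univ, sInf_range, halfspaceDepth] using continuous_sInf

lemma exists_measure_halfspace_eq_halfspaceDepth [Nontrivial E] {ν : Measure E} [IsFiniteMeasure ν]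
    (hnull : ∀ u : E, u ≠ 0 → ∀ c : ℝ, ν {x | ⟪x, u⟫_ℝ = c} = 0) (y : E) :
    ∃ u : Metric.sphere (0 : E) 1,
      ν {x | ⟪y, (u : E)⟫_ℝ ≤ ⟪x, (u : E)⟫_ℝ} = halfspaceDepth ν y := by
  have : Nonempty (Metric.sphere (0 : E) 1) :=
    (NormedSpace.sphere_nonempty.2 zero_le_one).to_subtype
  have continuous_direction : Continuous fun u : Metric.sphere (0 : E) 1 =>
      ν {x | ⟪y, (u : E)⟫_ℝ ≤ ⟪x, (u : E)⟫_ℝ} :=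
    (continuous_measure_halfspace (μ := fun _ : Unit => ν)
      (fun _ _ => lowerSemicontinuous_const) continuous_const fun _ => hnull).comp
      (.prodMk_right ((), y))
  obtain ⟨u, -, hu⟩ := isCompact_univ.exists_isMinOn univ_nonempty continuous_direction.continuousOn
  exact ⟨u, le_antisymm (le_iInf fun v => hu (mem_univ v)) (iInf_le _ u)⟩

theorem min_halfspace_measure_continuous_general [Nontrivial E]
    (hμ : ∀ U : Set E, IsOpen U → LowerSemicontinuous fun p => μ p U)
    (hmass : Continuous fun p => μ p univ)
    (hnull : ∀ p (u : E), u ≠ 0 → ∀ c : ℝ, μ p {x | ⟪x, u⟫_ℝ = c} = 0) :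
    (Continuous fun q : P × E => halfspaceDepth (μ q.1) q.2) ∧
      ∀ p (y : E), ∃ u : Metric.sphere (0 : E) 1,
        μ p {x | ⟪y, (u : E)⟫_ℝ ≤ ⟪x, (u : E)⟫_ℝ} = halfspaceDepth (μ p) y :=
  ⟨continuous_halfspaceDepth hμ hmass hnull,
    fun p => exists_measure_halfspace_eq_halfspaceDepth (hnull p)⟩

end HalfspaceDepth

/-- Continuity of the minimal halfspace measure: for a family of absolutely
continuous probability measures on `ℝ^d` (`d ≥ 1`), depending continuously on a
parameter from a second-countable space, with all supports in a single compact set,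
the function `f_p(y) = inf` over unit vectors `u` of `μ_p {x | ⟪x,u⟫ ≥ ⟪y,u⟫}`
(the minimum over closed halfspaces containing `y`) is jointly continuous in
`(p, y)`, and the infimum is attained. -/
theorem min_halfspace_measure_continuous (d : ℕ) (hd : 1 ≤ d) {P : Type*}
    [TopologicalSpace P] [SecondCountableTopology P]
    (μ : P → Measure (EuclideanSpace ℝ (Fin d)))
    (hprob : ∀ p, IsProbabilityMeasure (μ p))
    (hac : ∀ p, μ p ≪ volume)
    (hcont : ∀ U : Set (EuclideanSpace ℝ (Fin d)), IsOpen U →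
      Continuous fun p => μ p U)
    (K : Set (EuclideanSpace ℝ (Fin d))) (hK : IsCompact K)
    (hsupp : ∀ p, μ p Kᶜ = 0) :
    (Continuous fun q : P × EuclideanSpace ℝ (Fin d) =>
      ⨅ u : Metric.sphere (0 : EuclideanSpace ℝ (Fin d)) 1,
        μ q.1 {x | ⟪q.2, (u : EuclideanSpace ℝ (Fin d))⟫_ℝ ≤
          ⟪x, (u : EuclideanSpace ℝ (Fin d))⟫_ℝ}) ∧
    ∀ (p : P) (y : EuclideanSpace ℝ (Fin d)),
      ∃ u : Metric.sphere (0 : EuclideanSpace ℝ (Fin d)) 1,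
        μ p {x | ⟪y, (u : EuclideanSpace ℝ (Fin d))⟫_ℝ ≤
            ⟪x, (u : EuclideanSpace ℝ (Fin d))⟫_ℝ} =
          ⨅ v : Metric.sphere (0 : EuclideanSpace ℝ (Fin d)) 1,
            μ p {x | ⟪y, (v : EuclideanSpace ℝ (Fin d))⟫_ℝ ≤
              ⟪x, (v : EuclideanSpace ℝ (Fin d))⟫_ℝ} := by
  have : Nonempty (Fin d) := Fin.pos_iff_nonempty.1 hd
  exact min_halfspace_measure_continuous_general (fun U hU => (hcont U hU).lowerSemicontinuous)
    (hcont univ isOpen_univ) fun p u hu c => hac p (addHaar_setOf_inner_eq volume hu c)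
end

section
/- Let P be a topological space with a countable base and let {μ_p}_{p∈P} be a family of probability measures on ℝ^d, each absolutely continuous with respect to Lebesgue measure and 1-convex, depending continuously on p, with all supports contained in a single compact set. Then for every q ∈ P and every ε > 0 there exists a neighborhood U of q such that for all p ∈ U, cent μ_p is contained in the open ε-neighborhood of cent μ_q. -/
open scoped InnerProductSpace ENNReal
open MeasureTheory

/-- The support of a measure `ν` on `ℝ`: the points all of whose open neighborhoods
have positive measure. -/
def msupport (ν : Measure ℝ) : Set ℝ :=
  {t | ∀ U : Set ℝ, IsOpen U → t ∈ U → 0 < ν U}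

/-- A measure `μ` on `ℝ^d` is `1`-convex if for every unit vector `u` the support of
the pushforward of `μ` under `x ↦ ⟪x, u⟫` is connected. -/
def OneConvex {d : ℕ} (μ : Measure (EuclideanSpace ℝ (Fin d))) : Prop :=
  ∀ u : EuclideanSpace ℝ (Fin d), ‖u‖ = 1 →
    IsConnected (msupport (μ.map fun x => ⟪x, u⟫_ℝ))

/-- The set of central points of a measure `μ` on `ℝ^d`: points `x` such that every
closed halfspace containing `x` has `μ`-measure at least `1/(d+1)`. -/
def cent {d : ℕ} (μ : Measure (EuclideanSpace ℝ (Fin d))) :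
    Set (EuclideanSpace ℝ (Fin d)) :=
  {x | ∀ (u : EuclideanSpace ℝ (Fin d)) (c : ℝ), ‖u‖ = 1 → c ≤ ⟪x, u⟫_ℝ →
    1 / ((d : ℝ≥0∞) + 1) ≤ μ {y | c ≤ ⟪y, u⟫_ℝ}}

/-!
The relation `x ∈ cent (μ p)` is closed along `p → q`: if some closed halfspace containing `x` has
too small a `μ q`-measure, then so does a slightly larger closed halfspace, by continuity from
above. The larger halfspace contains a neighborhood of `x`, and its `μ p`-measure is still too
small for `p` near `q`. Separation by a hyperplane puts every central point into the closed convex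
hull of `K`, which is compact, and a closed relation with values in a compact set is upper
hemicontinuous.
-/

open Topology

theorem upperHemicontinuousAt_of_eventually_notMem {X Y : Type*} [TopologicalSpace X]
    [TopologicalSpace Y] {F : X → Set Y} {K : Set Y} {a : X} (hK : IsCompact K)
    (hFK : ∀ᶠ x in 𝓝 a, F x ⊆ K)
    (hF : ∀ y ∈ K, y ∉ F a → ∀ᶠ z : X × Y in 𝓝 (a, y), z.2 ∉ F z.1) :
    UpperHemicontinuousAt F a := by
  refine .of_forall_isOpen fun V hV hFV => ?_
  have hoff : ∀ᶠ x in 𝓝 a, ∀ y ∈ K \ V, y ∉ F x :=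
    (hK.diff hV).eventually_forall_of_forall_eventually
      fun y hy => hF y hy.1 fun hya => hy.2 (hFV hya)
  filter_upwards [hFK, hoff] with x hxK hx y hy
  by_contra hyV
  exact hx y ⟨hxK hy, hyV⟩ hy

theorem isCompact_closedConvexHull {E : Type*} [AddCommGroup E] [Module ℝ E] [UniformSpace E]
    [IsUniformAddGroup E] [ContinuousSMul ℝ E] [LocallyConvexSpace ℝ E] [QuasiCompleteSpace ℝ E]
    {K : Set E} (hK : IsCompact K) : IsCompact (closedConvexHull ℝ K : Set E) := by
  rw [closedConvexHull_eq_closure_convexHull]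
  exact isCompact_closure_of_totallyBounded_quasiComplete (𝕜 := ℝ) hK.totallyBounded.convexHull

section Superlevel

variable {α : Type*} [MeasurableSpace α] {g : α → ℝ}

theorem exists_lt_measure_superlevel_lt {ν : Measure α} [IsFiniteMeasure ν] (hg : Measurable g)
    {c : ℝ} {t : ℝ≥0∞} (h : ν {y | c ≤ g y} < t) : ∃ c' < c, ν {y | c' ≤ g y} < t := by
  have hlim := tendsto_measure_biInter_gt (μ := ν) (s := fun r => {y | c - r ≤ g y}) (a := 0)
    (fun r _ => (measurableSet_le measurable_const hg).nullMeasurableSet)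
    (fun i j _ hij y hy => (sub_le_sub_left hij c).trans hy) ⟨1, one_pos, measure_ne_top _ _⟩
  have hinter : ⋂ r > (0 : ℝ), {y | c - r ≤ g y} = {y | c ≤ g y} := by
    ext y
    simp only [Set.mem_iInter, Set.mem_ofPred_eq, sub_le_iff_le_add]
    exact le_iff_forall_pos_le_add.symm
  rw [hinter] at hlim
  obtain ⟨r, hrt, hr⟩ := ((hlim.eventually_lt_const h).and self_mem_nhdsWithin).exists
  exact ⟨c - r, sub_lt_self c hr, hrt⟩

theorem upperSemicontinuousAt_measure_superlevel {P : Type*} [TopologicalSpace P]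
    {μ : P → Measure α} {q : P} [IsFiniteMeasure (μ q)] (hg : Measurable g)
    (hμ : ∀ c, UpperSemicontinuousAt (fun p => μ p {y | c ≤ g y}) q) (c : ℝ) :
    UpperSemicontinuousAt (fun z : P × ℝ => μ z.1 {y | z.2 ≤ g y}) (q, c) := by
  intro t ht
  obtain ⟨c', hc', hc't⟩ := exists_lt_measure_superlevel_lt hg ht
  rw [nhds_prod_eq]
  filter_upwards [(hμ c' t hc't).prod_mk (lt_mem_nhds hc')] with z hz
  exact (measure_mono fun y hy => hz.2.le.trans hy).trans_lt hz.1

end Superlevel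

theorem continuousAt_measure_of_isClosed {P X : Type*} [TopologicalSpace P] [TopologicalSpace X]
    [MeasurableSpace X] [OpensMeasurableSpace X] {μ : P → Measure X} [∀ p, IsFiniteMeasure (μ p)]
    {q : P} (hμ : ∀ U, IsOpen U → ContinuousAt (fun p => μ p U) q) {F : Set X} (hF : IsClosed F) :
    ContinuousAt (fun p => μ p F) q := by
  have hcompl (p : P) : μ p F = μ p Set.univ - μ p Fᶜ := by
    rw [← measure_compl hF.measurableSet.compl (measure_ne_top _ _), compl_compl]
  simp only [hcompl]
  exact ENNReal.Tendsto.sub (hμ _ isOpen_univ) (hμ _ hF.isOpen_compl)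
    (.inl (measure_ne_top _ _))

/-- The region of (Tukey) depth at least `t`: the points all of whose closed halfspaces have
`μ`-measure at least `t`. Halfspaces are given by arbitrary continuous functionals, not only unit
vectors, and the functional `0` is allowed, so the region is empty when `μ univ < t`. -/
def depthRegion {E : Type*} [AddCommGroup E] [Module ℝ E] [TopologicalSpace E] [MeasurableSpace E]
    (μ : Measure E) (t : ℝ≥0∞) : Set E :=
  {x | ∀ f : StrongDual ℝ E, t ≤ μ {y | f x ≤ f y}}

theorem cent_eq_depthRegion {d : ℕ} (μ : Measure (EuclideanSpace ℝ (Fin d)))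
    [IsProbabilityMeasure μ] : cent μ = depthRegion μ (1 / ((d : ℝ≥0∞) + 1)) := by
  ext x
  constructor
  · intro hx f
    rcases eq_or_ne f 0 with rfl | hf
    · simp
    · set v := (InnerProductSpace.toDual ℝ _).symm f with hv
      have hv0 : v ≠ 0 := by simpa [hv] using hf
      have hfv (y : EuclideanSpace ℝ (Fin d)) : ⟪y, ‖v‖⁻¹ • v⟫_ℝ = ‖v‖⁻¹ * f y := by
        rw [real_inner_smul_right, real_inner_comm, InnerProductSpace.toDual_symm_apply]
      have h := hx (‖v‖⁻¹ • v) _ (norm_smul_inv_norm hv0) le_rfl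
      simpa only [hfv, mul_le_mul_iff_right₀ (inv_pos.2 (norm_pos_iff.2 hv0))] using h
  · intro hx u c _ hc
    refine (hx (innerSL ℝ u)).trans (measure_mono fun y hy => ?_)
    simp only [Set.mem_ofPred_eq, innerSL_apply_apply, real_inner_comm u] at hc hy ⊢
    exact hc.trans hy

section DepthRegion

variable {E : Type*} [AddCommGroup E] [Module ℝ E] [MeasurableSpace E] {t : ℝ≥0∞}

theorem depthRegion_subset_closedConvexHull [TopologicalSpace E] [IsTopologicalAddGroup E]
    [ContinuousSMul ℝ E] [LocallyConvexSpace ℝ E] {μ : Measure E} {K : Set E} (hμ : μ Kᶜ = 0)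
    (ht : t ≠ 0) : depthRegion μ t ⊆ closedConvexHull ℝ K := by
  intro x hx
  by_contra hxK
  obtain ⟨f, c, hfK, hfx⟩ := geometric_hahn_banach_closed_point convex_closedConvexHull
    isClosed_closedConvexHull hxK
  have hnull : μ {y | f x ≤ f y} = 0 := measure_mono_null
    (fun y hy hyK => (hfx.trans_le hy).not_gt (hfK y (subset_closedConvexHull hyK))) hμ
  exact ht (le_zero_iff.1 (hnull ▸ hx f))

theorem eventually_notMem_depthRegion {P : Type*} [TopologicalSpace P] [TopologicalSpace E]
    [OpensMeasurableSpace E] {μ : P → Measure E} {q : P} [IsFiniteMeasure (μ q)]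
    (hμ : ∀ (f : StrongDual ℝ E) (c : ℝ), UpperSemicontinuousAt (fun p => μ p {y | c ≤ f y}) q)
    {x : E} (hx : x ∉ depthRegion (μ q) t) :
    ∀ᶠ z : P × E in 𝓝 (q, x), z.2 ∉ depthRegion (μ z.1) t := by
  simp only [depthRegion, Set.mem_ofPred_eq, not_forall, not_le] at hx ⊢
  obtain ⟨f, hfx⟩ := hx
  have hcont : Continuous fun z : P × E => (z.1, f z.2) := by fun_prop
  have hev := hcont.tendsto (q, x) |>.eventually <|
    upperSemicontinuousAt_measure_superlevel f.continuous.measurable (hμ f) (f x) t hfx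
  exact hev.mono fun z hz => ⟨f, hz⟩

theorem cent_upper_semicontinuous_general [UniformSpace E] [IsUniformAddGroup E]
    [ContinuousSMul ℝ E] [LocallyConvexSpace ℝ E] [QuasiCompleteSpace ℝ E]
    [OpensMeasurableSpace E] {P : Type*} [TopologicalSpace P] {μ : P → Measure E} {q : P}
    [IsFiniteMeasure (μ q)]
    (hμ : ∀ (f : StrongDual ℝ E) (c : ℝ), UpperSemicontinuousAt (fun p => μ p {y | c ≤ f y}) q)
    {K : Set E} (hK : IsCompact K) (hsupp : ∀ᶠ p in 𝓝 q, μ p Kᶜ = 0) (ht : t ≠ 0) :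
    UpperHemicontinuousAt (fun p => depthRegion (μ p) t) q :=
  upperHemicontinuousAt_of_eventually_notMem (isCompact_closedConvexHull hK)
    (hsupp.mono fun _ hp => depthRegion_subset_closedConvexHull hp ht)
    fun _ _ => eventually_notMem_depthRegion hμ

end DepthRegion

/-- Upper semicontinuity of the central point set: for a continuous family of
`1`-convex absolutely continuous probability measures with supports in a single
compact set, near any parameter `q` the central point set is contained in the open
`ε`-neighborhood of the central point set at `q`. -/
theorem cent_upper_semicontinuous (d : ℕ) {P : Type*} [TopologicalSpace P]
    [SecondCountableTopology P]
    (μ : P → Measure (EuclideanSpace ℝ (Fin d)))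
    (hprob : ∀ p, IsProbabilityMeasure (μ p))
    (hac : ∀ p, μ p ≪ volume)
    (hconv : ∀ p, OneConvex (μ p))
    (hcont : ∀ U : Set (EuclideanSpace ℝ (Fin d)), IsOpen U →
      Continuous fun p => μ p U)
    (K : Set (EuclideanSpace ℝ (Fin d))) (hK : IsCompact K)
    (hsupp : ∀ p, μ p Kᶜ = 0)
    (q : P) (ε : ℝ) (hε : 0 < ε) :
    ∃ U ∈ nhds q, ∀ p ∈ U, cent (μ p) ⊆ Metric.thickening ε (cent (μ q)) := by
  simp only [cent_eq_depthRegion]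
  have husc (f : StrongDual ℝ (EuclideanSpace ℝ (Fin d))) (c : ℝ) :
      UpperSemicontinuousAt (fun p => μ p {y | c ≤ f y}) q :=
    (continuousAt_measure_of_isClosed (fun U hU => (hcont U hU).continuousAt)
      (isClosed_le continuous_const f.continuous)).upperSemicontinuousAt
  exact ((cent_upper_semicontinuous_general husc hK (.of_forall hsupp) (by simp)).forall_isOpen _
    Metric.isOpen_thickening (Metric.self_subset_thickening hε _)).exists_mem
end

section
/- (Central point theorem) Let μ be a probability measure on ℝ^d, absolutely continuous with respect to Lebesgue measure. Then there exists a point x ∈ ℝ^d such that every closed halfspace H containing x satisfies μ(H) ≥ 1/(d+1). -/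
open scoped InnerProductSpace ENNReal
open MeasureTheory

/-!
By Helly's theorem and a union bound, the closed convex hulls of all bounded sets whose complement
has mass less than `1/(d+1)` have a common point `x`. If a closed halfspace had mass less than
`1/(d+1)`, then by inner regularity the complementary open halfspace would contain a compact
set of this kind, and by compactness its closed convex hull too; so the closed halfspace cannot
contain `x`.
-/

theorem nonempty_biInter_of_measure_compl_lt {α ι : Type*} [Nonempty α] [MeasurableSpace α]
    {μ : Measure α} {I : Finset ι} {n : ℕ} (hI : I.card ≤ n) {s : ι → Set α}
    (hs : ∀ i ∈ I, μ (s i)ᶜ < μ Set.univ / n) : (⋂ i ∈ I, s i).Nonempty := by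
  rcases I.eq_empty_or_nonempty with rfl | hne
  · simp
  by_contra hempty
  have hcover : ⋃ i ∈ I, (s i)ᶜ = Set.univ := by
    rw [← Set.compl_iInter₂, Set.not_nonempty_iff_eq_empty.1 hempty, Set.compl_empty]
  refine lt_irrefl (μ Set.univ) ?_
  calc
    μ Set.univ ≤ ∑ i ∈ I, μ (s i)ᶜ := hcover ▸ measure_biUnion_finset_le I _
    _ < ∑ _i ∈ I, μ Set.univ / n := ENNReal.sum_lt_sum_of_nonempty hne hs
    _ = I.card * (μ Set.univ / n) := by rw [Finset.sum_const, nsmul_eq_mul]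
    _ ≤ n * (μ Set.univ / n) := by gcongr
    _ ≤ μ Set.univ := ENNReal.mul_div_le

theorem exists_isCompact_subset_measure_compl_lt {X : Type*} [TopologicalSpace X] [T2Space X]
    [MeasurableSpace X] [OpensMeasurableSpace X] {μ : Measure X} [μ.InnerRegularCompactLTTop]
    {s : Set X} (hs : MeasurableSet s) (hfin : μ s ≠ ∞) {r : ℝ≥0∞} (hr : μ sᶜ < r) :
    ∃ K ⊆ s, IsCompact K ∧ μ Kᶜ < r := by
  obtain ⟨K, hKs, hK, hdiff⟩ := hs.exists_isCompact_sdiff_lt hfin (tsub_pos_of_lt hr).ne'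
  refine ⟨K, hKs, hK, ?_⟩
  calc
    μ Kᶜ ≤ μ (sᶜ ∪ s \ K) := measure_mono fun x hx => by
      by_cases h : x ∈ s
      exacts [.inr ⟨h, hx⟩, .inl h]
    _ ≤ μ sᶜ + μ (s \ K) := measure_union_le _ _
    _ < μ sᶜ + (r - μ sᶜ) := ENNReal.add_lt_add_left hr.ne_top hdiff
    _ = r := add_tsub_cancel_of_le hr.le

theorem lt_of_mem_closedConvexHull {E : Type*} [AddCommGroup E] [Module ℝ E]
    [TopologicalSpace E] {K : Set E} (hK : IsCompact K) (f : StrongDual ℝ E) {c : ℝ}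
    (hlt : ∀ y ∈ K, f y < c) {x : E} (hx : x ∈ closedConvexHull ℝ K) : f x < c := by
  rcases K.eq_empty_or_nonempty with rfl | hne
  · exact absurd (closedConvexHull_min subset_rfl convex_empty isClosed_empty hx) (by simp)
  obtain ⟨z, hzK, hmax⟩ := hK.exists_isMaxOn hne f.continuous.continuousOn
  have hle : f x ≤ f z :=
    closedConvexHull_min hmax (convex_halfSpace_le f.isLinear (f z))
      (isClosed_le f.continuous continuous_const) hx
  exact hle.trans_lt (hlt z hzK)

theorem isCompact_closedConvexHull_of_isBounded {E : Type*} [NormedAddCommGroup E]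
    [NormedSpace ℝ E] [ProperSpace E] {K : Set E} (hK : Bornology.IsBounded K) :
    IsCompact (closedConvexHull ℝ K) := by
  rw [closedConvexHull_eq_closure_convexHull]
  exact (isBounded_convexHull.2 hK).isCompact_closure

section FiniteDimensional

variable {E : Type*} [NormedAddCommGroup E] [NormedSpace ℝ E] [FiniteDimensional ℝ E]
  [MeasurableSpace E] (μ : Measure E)

theorem exists_forall_mem_closedConvexHull_of_measure_compl_lt :
    ∃ x : E, ∀ K : Set E, Bornology.IsBounded K →
      μ Kᶜ < μ Set.univ / (Module.finrank ℝ E + 1 : ℕ) → x ∈ closedConvexHull ℝ K := by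
  let F := {K : Set E // Bornology.IsBounded K ∧
    μ Kᶜ < μ Set.univ / (Module.finrank ℝ E + 1 : ℕ)}
  have hinter : (⋂ K : F, closedConvexHull ℝ K.1).Nonempty :=
    Convex.helly_theorem_compact' (𝕜 := ℝ) (fun _ => convex_closedConvexHull)
      (fun K => isCompact_closedConvexHull_of_isBounded K.2.1) fun _ hI =>
      nonempty_biInter_of_measure_compl_lt hI fun K _ =>
        (measure_mono (Set.compl_subset_compl.2 subset_closedConvexHull)).trans_lt K.2.2
  obtain ⟨x, hx⟩ := hinter
  exact ⟨x, fun K hK hμK => Set.mem_iInter.1 hx ⟨K, hK, hμK⟩⟩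

theorem central_point_general [BorelSpace E] [IsFiniteMeasure μ] :
    ∃ x : E, ∀ (f : StrongDual ℝ E) (c : ℝ), c ≤ f x →
      μ Set.univ / (Module.finrank ℝ E + 1 : ℕ) ≤ μ {y | c ≤ f y} := by
  obtain ⟨x, hx⟩ := exists_forall_mem_closedConvexHull_of_measure_compl_lt μ
  refine ⟨x, fun f c hc => ?_⟩
  by_contra! hlt
  have hopen : IsOpen {y | f y < c} := isOpen_lt f.continuous continuous_const
  have hcompl : {y | f y < c}ᶜ = {y | c ≤ f y} := by ext; simp
  obtain ⟨K, hKs, hK, hμK⟩ := exists_isCompact_subset_measure_compl_lt hopen.measurableSet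
    (measure_ne_top μ _) (hcompl ▸ hlt)
  exact (lt_of_mem_closedConvexHull hK f hKs (hx K hK.isBounded hμK)).not_ge hc

end FiniteDimensional

/-- The central point theorem: for an absolutely continuous probability measure `μ`
on `ℝ^d` there is a point `x` such that every closed halfspace containing `x` has
`μ`-measure at least `1/(d+1)`. -/
theorem central_point (d : ℕ) (μ : Measure (EuclideanSpace ℝ (Fin d)))
    [IsProbabilityMeasure μ] (hac : μ ≪ volume) :
    ∃ x : EuclideanSpace ℝ (Fin d),
      ∀ (u : EuclideanSpace ℝ (Fin d)) (c : ℝ), ‖u‖ = 1 → c ≤ ⟪x, u⟫_ℝ →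
        1 / ((d : ℝ≥0∞) + 1) ≤ μ {y | c ≤ ⟪y, u⟫_ℝ} := by
  obtain ⟨x, hx⟩ := central_point_general μ
  refine ⟨x, fun u c _ hc => ?_⟩
  simpa [real_inner_comm] using hx (innerSL ℝ u) c (by simpa [real_inner_comm] using hc)
end

section
/- (Discrete central point theorem) Let X ⊂ ℝ^d be a finite set with |X| = n. Then there exists a point x ∈ ℝ^d such that every closed halfspace H containing x satisfies |H ∩ X| ≥ ⌊(n+d)/(d+1)⌋. -/
open scoped InnerProductSpace

/-!
Call `Y ⊆ X` heavy if `X \ Y` has less than the fraction `1 / (d + 1)` of the total weight. The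
complements of `d + 1` heavy sets cannot cover `X`, so any `d + 1` heavy sets share a point of `X`,
and Helly's theorem gives a point `x` in the convex hulls of all heavy sets. If a set `H` contains
`x` and has convex complement, then `X \ H` is not heavy, since its hull misses `x`; hence `X ∩ H`
has at least the fraction `1 / (d + 1)` of the weight.
-/

section WeightedCovering

variable {ι α M : Type*} [DecidableEq α] [AddCommMonoid M] [PartialOrder M]

theorem sum_biUnion_le_sum_sum [IsOrderedAddMonoid M] {s : Finset ι} {t : ι → Finset α} {w : α → M}
    (hw : ∀ i ∈ s, ∀ a ∈ t i, 0 ≤ w a) :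
    ∑ a ∈ s.biUnion t, w a ≤ ∑ i ∈ s, ∑ a ∈ t i, w a := by
  have image_snd : (s.sigma t).image Sigma.snd = s.biUnion t := by
    ext a
    simp
  rw [Finset.sum_sigma', ← image_snd]
  refine Finset.sum_image_le_of_nonneg fun a ha ↦ ?_
  obtain ⟨i, hi, hai⟩ := Finset.mem_biUnion.1 (image_snd ▸ ha)
  exact hw i hi a hai

theorem exists_mem_forall_mem_of_nsmul_sum_sdiff_lt [IsOrderedCancelAddMonoid M]
    {X : Finset α} {w : α → M} {I : Finset (Finset α)} {k : ℕ} (hX : X.Nonempty)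
    (hw : ∀ a ∈ X, 0 ≤ w a) (hI : I.card ≤ k)
    (heavy : ∀ Y ∈ I, k • ∑ a ∈ X \ Y, w a < ∑ a ∈ X, w a) :
    ∃ a ∈ X, ∀ Y ∈ I, a ∈ Y := by
  by_contra! missed
  have hI₀ : I.Nonempty := by
    obtain ⟨a, ha⟩ := hX
    obtain ⟨Y, hY, -⟩ := missed a ha
    exact ⟨Y, hY⟩
  have cover : X ⊆ I.biUnion (X \ ·) := fun a ha ↦ by
    obtain ⟨Y, hY, haY⟩ := missed a ha
    exact Finset.mem_biUnion.2 ⟨Y, hY, Finset.mem_sdiff.2 ⟨ha, haY⟩⟩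
  have total_le : ∑ a ∈ X, w a ≤ ∑ Y ∈ I, ∑ a ∈ X \ Y, w a :=
    (Finset.sum_le_sum_of_subset_of_nonneg cover fun a ha _ ↦ by
      obtain ⟨Y, -, haY⟩ := Finset.mem_biUnion.1 ha
      exact hw a (Finset.mem_sdiff.1 haY).1).trans
    (sum_biUnion_le_sum_sum fun _ _ a ha ↦ hw a (Finset.mem_sdiff.1 ha).1)
  have : k • ∑ a ∈ X, w a < k • ∑ a ∈ X, w a := calc
    k • ∑ a ∈ X, w a ≤ k • ∑ Y ∈ I, ∑ a ∈ X \ Y, w a := nsmul_le_nsmul_right total_le k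
    _ = ∑ Y ∈ I, k • ∑ a ∈ X \ Y, w a := Finset.smul_sum
    _ < ∑ _Y ∈ I, ∑ a ∈ X, w a := Finset.sum_lt_sum_of_nonempty hI₀ heavy
    _ = I.card • ∑ a ∈ X, w a := Finset.sum_const _
    _ ≤ k • ∑ a ∈ X, w a := nsmul_le_nsmul_left (Finset.sum_nonneg hw) hI
  exact this.false

end WeightedCovering

section Centerpoint

open Module

variable {𝕜 E : Type*} [Field 𝕜] [LinearOrder 𝕜] [IsStrictOrderedRing 𝕜] [AddCommGroup E]
  [Module 𝕜 E] [FiniteDimensional 𝕜 E]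

variable (𝕜) in
theorem exists_forall_mem_convexHull_of_nsmul_sum_sdiff_lt [DecidableEq E] {M : Type*}
    [AddCommMonoid M] [PartialOrder M] [IsOrderedCancelAddMonoid M] {X : Finset E} {w : E → M}
    (hw : ∀ y ∈ X, 0 ≤ w y) :
    ∃ x : E, ∀ Y ⊆ X, (finrank 𝕜 E + 1) • ∑ y ∈ X \ Y, w y < ∑ y ∈ X, w y →
      x ∈ convexHull 𝕜 (Y : Set E) := by
  classical
  obtain rfl | hX := X.eq_empty_or_nonempty
  · simp
  let heavy : Finset (Finset E) :=
    {Y ∈ X.powerset | (finrank 𝕜 E + 1) • ∑ y ∈ X \ Y, w y < ∑ y ∈ X, w y}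
  obtain ⟨x, hx⟩ : (⋂ Y ∈ heavy, convexHull 𝕜 (Y : Set E)).Nonempty := by
    refine Convex.helly_theorem' (fun Y _ ↦ convex_convexHull 𝕜 (Y : Set E)) fun I hI hcard ↦ ?_
    obtain ⟨p, -, hp⟩ := exists_mem_forall_mem_of_nsmul_sum_sdiff_lt hX hw hcard
      fun Y hY ↦ (Finset.mem_filter.1 (hI hY)).2
    exact ⟨p, Set.mem_iInter₂.2 fun Y hY ↦ subset_convexHull 𝕜 _ (hp Y hY)⟩
  exact ⟨x, fun Y hYX hY ↦
    Set.mem_iInter₂.1 hx Y (Finset.mem_filter.2 ⟨Finset.mem_powerset.2 hYX, hY⟩)⟩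

variable (𝕜) in
theorem discrete_central_point_general (X : Finset E) :
    ∃ x : E, ∀ H : Set E, Convex 𝕜 Hᶜ → x ∈ H →
      (X.card + finrank 𝕜 E) / (finrank 𝕜 E + 1) ≤ ((X : Set E) ∩ H).ncard := by
  classical
  obtain ⟨x, hx⟩ := exists_forall_mem_convexHull_of_nsmul_sum_sdiff_lt 𝕜
    (X := X) (w := fun _ ↦ 1) fun _ _ ↦ zero_le_one' ℕ
  refine ⟨x, fun H hH hxH ↦ ?_⟩
  have ncard_inter : ((X : Set E) ∩ H).ncard = (X \ {y ∈ X | y ∉ H}).card := by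
    rw [← Set.ncard_coe_finset]
    congr 1
    ext y
    simp +contextual
  -- The left-hand side is the ceiling of `X.card / (finrank 𝕜 E + 1)`.
  change X.card ⌈/⌉ (finrank 𝕜 E + 1) ≤ _
  rw [ceilDiv_le_iff_le_smul (Nat.succ_pos _), ncard_inter]
  by_contra! hlt
  have hull_subset : convexHull 𝕜 ({y ∈ X | y ∉ H} : Finset E) ⊆ Hᶜ :=
    convexHull_min (fun y hy ↦ (Finset.mem_filter.1 hy).2) hH
  exact hull_subset (hx _ (Finset.filter_subset _ _) (by simpa using hlt)) hxH

end Centerpoint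

theorem convex_compl_setOf_le_inner {E : Type*} [NormedAddCommGroup E] [InnerProductSpace ℝ E]
    (u : E) (c : ℝ) : Convex ℝ {y : E | c ≤ ⟪y, u⟫_ℝ}ᶜ := by
  simpa only [Set.compl_ofPred, not_le, LinearMap.flip_apply, innerₗ_apply_apply] using
    convex_halfSpace_lt ((innerₗ E).flip u).isLinear c

/-- The discrete central point theorem: for a finite set `X ⊂ ℝ^d` of `n` points
there is a point `x` such that every closed halfspace containing `x` contains at
least `⌊(n+d)/(d+1)⌋` points of `X`. -/
theorem discrete_central_point (d n : ℕ) (X : Finset (EuclideanSpace ℝ (Fin d)))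
    (hX : X.card = n) :
    ∃ x : EuclideanSpace ℝ (Fin d),
      ∀ (u : EuclideanSpace ℝ (Fin d)) (c : ℝ), ‖u‖ = 1 → c ≤ ⟪x, u⟫_ℝ →
        (n + d) / (d + 1) ≤ {y ∈ (X : Set (EuclideanSpace ℝ (Fin d))) | c ≤ ⟪y, u⟫_ℝ}.ncard := by
  obtain ⟨x, hx⟩ := discrete_central_point_general ℝ X
  rw [hX, finrank_euclideanSpace_fin] at hx
  exact ⟨x, fun u c _ hc ↦ hx _ (convex_compl_setOf_le_inner u c) hc⟩
end

section
/- (Tverberg's theorem) Let n ≥ 1 and let X ⊂ ℝ^d be a set of (d+1)(n−1)+1 points. Then X can be partitioned into n pairwise disjoint subsets X_1, …, X_n whose convex hulls have a common point: ⋂_{i=1}^n conv X_i ≠ ∅. -/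
/-!
Sarkaria's proof. Lift the points to `y i = (x i, 1) ∈ V × ℝ` and place the lifts in the quotient of
`κ → V × ℝ` by the constant functions: point `i` with label `k` becomes the class of the function
supported at `k` with value `y i`. The classes of one point under all labels sum to zero, so the
colorful Carathéodory theorem picks one label for each point such that `0` is a convex combination
of the chosen classes. Vanishing in the quotient means that the weighted sum of the lifts with
label `k` does not depend on `k`: all labels have the same total weight and the same weighted sum of
points, so they have the same center of mass.

For the colorful Carathéodory theorem (Bárány), take the point `p` of smallest norm among the convex
hulls of all transversals. If `p ≠ 0`, then `p` lies on the face of its hull orthogonal to `p`. This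
face misses `0`, so by Carathéodory's theorem at most `dim V` of its points, hence not all colors,
are needed to express `p`; exchanging the point of a superfluous color for one in the half-space
`{x | ⟪p, x⟫ ≤ 0}` yields a transversal whose hull comes closer to `0`.
-/

open Module

theorem linearIndependent_of_affineIndependent_of_map_eq {R E ι : Type*} [Ring R] [NoZeroDivisors R]
    [AddCommGroup E] [Module R E] {z : ι → E} (hz : AffineIndependent R z) (f : E →ₗ[R] R) {a : R}
    (ha : a ≠ 0) (hf : ∀ i, f (z i) = a) : LinearIndependent R z := by
  rw [linearIndependent_iff']
  intro s g hg
  have hsum : (∑ i ∈ s, g i) * a = 0 := by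
    simpa [hf, Finset.sum_mul] using congrArg f hg
  exact affineIndependent_iff.mp hz s g ((mul_eq_zero.mp hsum).resolve_right ha) hg

theorem map_eq_of_le_map_of_convexCombination {R E ι : Type*} [Semiring R] [LinearOrder R]
    [IsStrictOrderedRing R] [AddCommMonoid E] [Module R E] [Fintype ι] {z : ι → E} {w : ι → R}
    (hw : ∀ i, 0 < w i) (hw₁ : ∑ i, w i = 1) (f : E →ₗ[R] R)
    (hf : ∀ i, f (∑ j, w j • z j) ≤ f (z i)) (i : ι) : f (z i) = f (∑ j, w j • z j) := by
  set a := f (∑ j, w j • z j) with ha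
  have hsum : ∑ j, w j * a = ∑ j, w j * f (z j) := by
    rw [← Finset.sum_mul, hw₁, one_mul, ha, map_sum]
    simp only [map_smul, smul_eq_mul]
  have hterm := (Finset.sum_eq_sum_iff_of_le fun j _ ↦
    mul_le_mul_of_nonneg_left (hf j) (hw j).le).mp hsum i (Finset.mem_univ i)
  exact (le_of_mul_le_mul_left hterm.ge (hw i)).antisymm (hf i)

section ConvexHull

variable {𝕜 E ι : Type*} [Field 𝕜] [LinearOrder 𝕜] [IsStrictOrderedRing 𝕜]
  [AddCommGroup E] [Module 𝕜 E]

theorem convexHull_range_eq_image_stdSimplex [Fintype ι] (v : ι → E) :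
    convexHull 𝕜 (Set.range v) = Fintype.linearCombination 𝕜 v '' stdSimplex 𝕜 ι := by
  classical
  rw [← convexHull_rangle_single_eq_stdSimplex, LinearMap.image_convexHull, ← Set.range_comp]
  congr 2 with i
  simp

theorem zero_mem_convexHull_range_of_sum_eq_zero [Fintype ι] [Nonempty ι] {v : ι → E}
    (hv : ∑ i, v i = 0) : 0 ∈ convexHull 𝕜 (Set.range v) := by
  have hmem := Finset.univ.centerMass_mem_convexHull (w := fun _ ↦ (1 : 𝕜)) (z := v)
    (fun _ _ ↦ zero_le_one) (by simp [Fintype.card_pos]) fun i _ ↦ Set.mem_range_self i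
  simpa [Finset.centerMass, hv] using hmem

theorem exists_mem_convexHull_image_compl_singleton [Fintype ι] [FiniteDimensional 𝕜 E] {v : ι → E}
    (hcard : finrank 𝕜 E < Fintype.card ι) {p : E} (hp : p ∈ convexHull 𝕜 (Set.range v))
    (f : E →ₗ[𝕜] 𝕜) (hfp : f p ≠ 0) (hfv : ∀ i, f p ≤ f (v i)) :
    ∃ i, p ∈ convexHull 𝕜 (v '' {i}ᶜ) := by
  obtain ⟨J, _, z, w, hzv, hz, hw, hw₁, rfl⟩ := eq_pos_convex_span_of_mem_convexHull hp
  choose σ hσ using fun j ↦ hzv (Set.mem_range_self j)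
  have hface : ∀ j, f (z j) = f (∑ j, w j • z j) :=
    map_eq_of_le_map_of_convexCombination hw hw₁ f fun j ↦ hσ j ▸ hfv (σ j)
  have hJ : Fintype.card J < Fintype.card ι :=
    (linearIndependent_of_affineIndependent_of_map_eq hz f hfp
      hface).fintype_card_le_finrank.trans_lt hcard
  obtain ⟨i, hi⟩ : ∃ i, ∀ j, σ j ≠ i := by
    by_contra! hsurj
    exact hJ.not_ge (Fintype.card_le_of_surjective σ hsurj)
  exact ⟨i, (convex_convexHull 𝕜 _).sum_mem (fun j _ ↦ (hw j).le) hw₁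
    fun j _ ↦ subset_convexHull 𝕜 _ ⟨σ j, hi j, hσ j⟩⟩

end ConvexHull

section ColorfulCaratheodory

theorem real_inner_self_le_of_isMinOn_norm {E : Type*} [NormedAddCommGroup E]
    [InnerProductSpace ℝ E] {K : Set E} (hK : Convex ℝ K) {p q : E} (hp : p ∈ K)
    (hmin : IsMinOn norm K p) (hq : q ∈ K) : inner ℝ p p ≤ inner ℝ p q := by
  have : Nonempty K := ⟨⟨p, hp⟩⟩
  have hdist : ‖0 - p‖ = ⨅ x : K, ‖0 - (x : E)‖ := by
    simp only [zero_sub, norm_neg]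
    exact le_antisymm (le_ciInf fun x ↦ hmin x.2)
      (ciInf_le ⟨0, Set.forall_mem_range.mpr fun _ ↦ norm_nonneg _⟩ (⟨p, hp⟩ : K))
  have hle := (norm_eq_iInf_iff_real_inner_le_zero hK hp).mp hdist q hq
  simpa [inner_sub_right] using hle

variable {V ι : Type*}

theorem exists_transversal_isMinOn_norm [NormedAddCommGroup V] [NormedSpace ℝ V] [Finite ι]
    [Nonempty ι] {S : ι → Set V} (hS : ∀ i, (S i).Finite) (hne : ∀ i, (S i).Nonempty) :
    ∃ s ∈ Set.univ.pi S, ∃ p ∈ convexHull ℝ (Set.range s),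
      ∀ t ∈ Set.univ.pi S, IsMinOn norm (convexHull ℝ (Set.range t)) p := by
  have hcompact : IsCompact (⋃ s ∈ Set.univ.pi S, convexHull ℝ (Set.range s)) :=
    (Set.Finite.pi hS).isCompact_biUnion fun s _ ↦ (Set.finite_range s).isCompact_convexHull ℝ
  have hunion : (⋃ s ∈ Set.univ.pi S, convexHull ℝ (Set.range s)).Nonempty := by
    obtain ⟨s, hs⟩ := Set.univ_pi_nonempty_iff.mpr hne
    exact (Set.range_nonempty s).convexHull.mono
      (Set.subset_biUnion_of_mem (u := fun s : ι → V ↦ convexHull ℝ (Set.range s)) hs)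
  obtain ⟨p, hp, hmin⟩ := hcompact.exists_isMinOn hunion continuous_norm.continuousOn
  obtain ⟨s, hs, hps⟩ := Set.mem_iUnion₂.mp hp
  exact ⟨s, hs, p, hps, fun t ht ↦ hmin.on_subset
    (Set.subset_biUnion_of_mem (u := fun s : ι → V ↦ convexHull ℝ (Set.range s)) ht)⟩

variable [Fintype ι]

theorem colorful_caratheodory_of_finite [NormedAddCommGroup V] [InnerProductSpace ℝ V]
    [FiniteDimensional ℝ V] (hcard : finrank ℝ V < Fintype.card ι) {S : ι → Set V}
    (hS : ∀ i, (S i).Finite) (h₀ : ∀ i, 0 ∈ convexHull ℝ (S i)) :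
    ∃ s ∈ Set.univ.pi S, 0 ∈ convexHull ℝ (Set.range s) := by
  classical
  have : Nonempty ι := Fintype.card_pos_iff.mp (Nat.zero_lt_of_lt hcard)
  obtain ⟨s, hs, p, hp, hmin⟩ :=
    exists_transversal_isMinOn_norm hS fun i ↦ convexHull_nonempty_iff.mp ⟨0, h₀ i⟩
  have hface : ∀ t ∈ Set.univ.pi S, p ∈ convexHull ℝ (Set.range t) →
      ∀ i, inner ℝ p p ≤ inner ℝ p (t i) := fun t ht hpt i ↦
    real_inner_self_le_of_isMinOn_norm (convex_convexHull ℝ _) hpt (hmin t ht)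
      (subset_convexHull ℝ _ (Set.mem_range_self i))
  suffices p = 0 from ⟨s, hs, this ▸ hp⟩
  by_contra hp₀
  obtain ⟨i, hpi⟩ := exists_mem_convexHull_image_compl_singleton hcard hp (innerₗ V p)
    (inner_self_ne_zero.mpr hp₀) (hface s hs hp)
  obtain ⟨x, hx, hpx⟩ : ∃ x ∈ S i, inner ℝ p x ≤ 0 := by
    simpa using ((innerₗ V p).concaveOn convex_univ).exists_le_of_mem_convexHull
      (Set.subset_univ _) (h₀ i)
  have hexchange : p ∈ convexHull ℝ (Set.range (Function.update s i x)) := by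
    refine convexHull_mono ?_ hpi
    rintro _ ⟨j, hj, rfl⟩
    exact ⟨j, Function.update_of_ne hj x s⟩
  have hle := hface _ ((Set.update_mem_pi_iff_of_mem hs).mpr fun _ ↦ hx) hexchange i
  rw [Function.update_self] at hle
  exact (real_inner_self_pos.mpr hp₀).not_ge (hle.trans hpx)

theorem colorful_caratheodory [AddCommGroup V] [Module ℝ V] [FiniteDimensional ℝ V]
    (hcard : finrank ℝ V < Fintype.card ι) {S : ι → Set V} (h₀ : ∀ i, 0 ∈ convexHull ℝ (S i)) :
    ∃ s ∈ Set.univ.pi S, 0 ∈ convexHull ℝ (Set.range s) := by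
  let e : V ≃ₗ[ℝ] EuclideanSpace ℝ (Fin (finrank ℝ V)) := LinearEquiv.ofFinrankEq _ _ (by simp)
  have hfin : ∀ i, ∃ T : Finset V, ↑T ⊆ S i ∧ 0 ∈ convexHull ℝ (T : Set V) := fun i ↦ by
    simpa [convexHull_eq_union_convexHull_finite_subsets (S i)] using h₀ i
  choose T hTS hT using hfin
  obtain ⟨s, hs, hs₀⟩ := colorful_caratheodory_of_finite (S := fun i ↦ e '' T i) (by simpa)
    (fun i ↦ (T i).finite_toSet.image e) fun i ↦ by
      rw [← e.coe_coe, ← LinearMap.image_convexHull]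
      exact ⟨0, hT i, map_zero e⟩
  choose t ht hts using fun i ↦ hs i trivial
  obtain rfl : (fun i ↦ e (t i)) = s := funext hts
  refine ⟨t, fun i _ ↦ hTS i (ht i), ?_⟩
  rw [Set.range_comp' e t, ← e.coe_coe, ← LinearMap.image_convexHull] at hs₀
  obtain ⟨x, hx, hx₀⟩ := hs₀
  exact e.map_eq_zero_iff.mp hx₀ ▸ hx

end ColorfulCaratheodory

section Sarkaria

/-- The diagonal of `κ → Y`, as the submodule of constant functions. Sarkaria's vectors live in the
quotient by it, which plays the role of the tensor product of `Y` with the span of the vertices of a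
simplex centered at the origin. -/
def constFunctions (R κ Y : Type*) [Semiring R] [AddCommMonoid Y] [Module R Y] :
    Submodule R (κ → Y) :=
  LinearMap.range (LinearMap.pi fun _ ↦ LinearMap.id)

theorem mem_constFunctions {R κ Y : Type*} [Semiring R] [AddCommMonoid Y] [Module R Y]
    {g : κ → Y} : g ∈ constFunctions R κ Y ↔ ∃ z, ∀ k, g k = z := by
  simp [constFunctions, funext_iff, eq_comm]

theorem finrank_quotient_constFunctions (K κ Y : Type*) [DivisionRing K] [AddCommGroup Y]
    [Module K Y] [FiniteDimensional K Y] [Fintype κ] [Nonempty κ] :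
    finrank K ((κ → Y) ⧸ constFunctions K κ Y) = finrank K Y * (Fintype.card κ - 1) := by
  have hconst : finrank K (constFunctions K κ Y) = finrank K Y :=
    LinearMap.finrank_range_of_inj (Function.const_injective (α := κ))
  have hpi : finrank K (κ → Y) = finrank K Y * Fintype.card κ := by
    rw [finrank_pi_fintype, Finset.sum_const, Finset.card_univ, smul_eq_mul, mul_comm]
  have hquot := (constFunctions K κ Y).finrank_quotient_add_finrank
  rw [Nat.mul_sub_one]
  lia

variable {ι κ : Type*} [Fintype ι] [Fintype κ] [DecidableEq κ] [Nonempty κ]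

theorem exists_fiberwise_weighted_sum_eq {Y : Type*} [AddCommGroup Y] [Module ℝ Y]
    [FiniteDimensional ℝ Y] (y : ι → Y)
    (hcard : finrank ℝ Y * (Fintype.card κ - 1) < Fintype.card ι) :
    ∃ (c : ι → κ) (w : ι → ℝ) (z : Y), w ∈ stdSimplex ℝ ι ∧
      ∀ k, ∑ i with c i = k, w i • y i = z := by
  let φ (i : ι) (k : κ) : (κ → Y) ⧸ constFunctions ℝ κ Y :=
    (constFunctions ℝ κ Y).mkQ (Pi.single k (y i))
  have hφ : ∀ i, ∑ k, φ i k = 0 := fun i ↦ by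
    rw [← map_sum, Finset.univ_sum_single fun _ : κ ↦ y i, Submodule.mkQ_apply,
      Submodule.Quotient.mk_eq_zero]
    exact mem_constFunctions.mpr ⟨y i, fun _ ↦ rfl⟩
  obtain ⟨s, hs, hs₀⟩ := colorful_caratheodory
    ((finrank_quotient_constFunctions ℝ κ Y).trans_lt hcard)
    fun i ↦ zero_mem_convexHull_range_of_sum_eq_zero (hφ i)
  choose c hc using fun i ↦ hs i trivial
  rw [convexHull_range_eq_image_stdSimplex] at hs₀
  obtain ⟨w, hw, hsum⟩ := hs₀
  have hconst : ∑ i, w i • Pi.single (c i) (y i) ∈ constFunctions ℝ κ Y := by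
    rw [← Submodule.Quotient.mk_eq_zero, ← Submodule.mkQ_apply, map_sum, ← hsum,
      Fintype.linearCombination_apply]
    exact Finset.sum_congr rfl fun i _ ↦ by rw [map_smul, ← hc i]
  obtain ⟨z, hz⟩ := mem_constFunctions.mp hconst
  refine ⟨c, w, z, hw, fun k ↦ ?_⟩
  rw [← hz k, Finset.sum_filter, Finset.sum_apply]
  exact Finset.sum_congr rfl fun i _ ↦ by simp [Pi.single_apply, eq_comm]

end Sarkaria

section Tverberg

variable {V ι κ : Type*} [AddCommGroup V] [Module ℝ V] [FiniteDimensional ℝ V] [Fintype κ]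
  [Nonempty κ]

theorem exists_forall_mem_convexHull_image_fiber [Fintype ι] (x : ι → V)
    (hcard : (finrank ℝ V + 1) * (Fintype.card κ - 1) < Fintype.card ι) :
    ∃ (c : ι → κ) (p : V), ∀ k, p ∈ convexHull ℝ (x '' {i | c i = k}) := by
  classical
  obtain ⟨c, w, ⟨q, s⟩, ⟨hw₀, hw₁⟩, hsum⟩ :=
    exists_fiberwise_weighted_sum_eq (κ := κ) (fun i ↦ (x i, (1 : ℝ))) (by simpa)
  have hpoint : ∀ k, ∑ i with c i = k, w i • x i = q := fun k ↦ by
    simpa [Prod.fst_sum] using congrArg Prod.fst (hsum k)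
  have hweight : ∀ k, ∑ i with c i = k, w i = s := fun k ↦ by
    simpa [Prod.snd_sum] using congrArg Prod.snd (hsum k)
  have hs : 0 < s := by
    have htotal : Fintype.card κ * s = 1 := by
      rw [← hw₁, ← Finset.sum_fiberwise Finset.univ c w]
      simp [hweight]
    exact pos_of_mul_pos_right (htotal ▸ one_pos) (Nat.cast_nonneg _)
  refine ⟨c, s⁻¹ • q, fun k ↦ ?_⟩
  have hmem := Finset.centerMass_mem_convexHull {i | c i = k} (w := w) (z := x)
    (s := x '' {i | c i = k}) (fun i _ ↦ hw₀ i) (by rwa [hweight])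
    fun i hi ↦ ⟨i, (Finset.mem_filter.mp hi).2, rfl⟩
  rwa [Finset.centerMass, hweight, hpoint] at hmem

theorem tverberg_general (x : ι → V) (s : Finset ι)
    (hcard : (finrank ℝ V + 1) * (Fintype.card κ - 1) < s.card) :
    ∃ (c : ι → κ) (p : V), ∀ k, p ∈ convexHull ℝ (x '' {i | i ∈ s ∧ c i = k}) := by
  obtain ⟨c, p, hp⟩ := exists_forall_mem_convexHull_image_fiber (κ := κ) (fun i : s ↦ x i)
    (by simpa)
  refine ⟨Function.extend Subtype.val c fun _ ↦ Classical.arbitrary κ, p, fun k ↦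
    convexHull_mono ?_ (hp k)⟩
  rintro _ ⟨i, hi, rfl⟩
  exact ⟨i, ⟨i.2, (Subtype.val_injective.extend_apply c _ i).trans hi⟩, rfl⟩

end Tverberg

/-- Tverberg's theorem: a set of `(d+1)(n-1)+1` points in `ℝ^d` can be partitioned
into `n` pairwise disjoint subsets whose convex hulls have a common point.
The partition is encoded by a labeling function `c`; the parts are its fibers in `X`. -/
theorem tverberg (d n : ℕ) (hn : 1 ≤ n) (X : Finset (EuclideanSpace ℝ (Fin d)))
    (hX : X.card = (d + 1) * (n - 1) + 1) :
    ∃ c : EuclideanSpace ℝ (Fin d) → Fin n,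
      ∃ p : EuclideanSpace ℝ (Fin d), ∀ i : Fin n,
        p ∈ convexHull ℝ {x | x ∈ X ∧ c x = i} := by
  have : Nonempty (Fin n) := ⟨0, hn⟩
  simpa using tverberg_general (κ := Fin n) id X (by simp [hX])
end
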